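/- arXiv:2401.01027 — 2 statements merged into one kernel-verified Lean document; each statement's English description precedes it below -/
import Mathlib

section
/- Let n = a + b + c, where a ≥ 1 and b, c ≥ 0. Then the chromatic symmetric function of the barbell K(a1^b c) satisfies X_{K(a1^b c)} = (a−1)! · c! · ( Σ_{I ⊨ n, i_{−1} ≥ a, i_1 ≥ c+1} w_I · e_I + Σ_{I ⊨ n, i_{−1} ≥ a, i_1 ≤ c < i_2} (i_2 − i_1) · ∏_{j ≥ 3}(i_j − 1) · e_I ). -/
/-!
Working modulo all variables `x_i` with `i ≥ N` turns power series identities into identities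
between finite sums, and equality for every `N` suffices (`eq_of_forall_mk`).

In finitely many variables, let `L_b(i)` be the generating function, divided by `(a-1)!`, of the
proper colorings of the lollipop `K(a 1^b)` whose last vertex has color `i`. Attaching a clique
with `c` new vertices there shows that the chromatic symmetric function of the barbell is
`(a-1)! c! T(b, c)` with `T(b, c) = ∑ i, L_b(i) e_c(x ∖ x_i)`. Since
`L_{b+1}(i) = x_i (∑ j, L_b(j) - L_b(i))`, and since
`x_i e_c(x ∖ x_i) = e_{c+1}(x) - e_{c+1}(x ∖ x_i)` and `∑ i, x_i e_c(x ∖ x_i) = (c+1) e_{c+1}`,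
one gets `T(b+1, c) = c e_{c+1} T(b, 0) + T(b, c+1)` (`barb_succ`; in the code `barb` carries
the factor `(a-1)!`). For `b = 0`, `T(0, c) = ∑_{j ≤ c} (n - 2j) e_j e_{n-j}` (`barb_zero`).

The right-hand side satisfies the same recursion. The summands for `c` and `c + 1` differ only
on compositions whose first or second part is `c + 1`; exchanging the first two parts makes
`c + 1` the first part in both cases, and removing it leaves a composition `J` of `a + b` with
total coefficient `c` times that of `J` in the lollipop expansion (`diff_pointwise`,
`sum_term_succ`). The case `b = 0` is `sum_term_base`. Induction on `b` concludes (`barb_eq`).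
-/

open Finset

/-- Symmetric functions in countably many variables `x_0, x_1, x_2, …`, realized inside
the ring of formal multivariate power series over `ℚ`. -/
abbrev SymF : Type := MvPowerSeries ℕ ℚ

open Classical in
/-- The elementary symmetric function `e_k`: the sum of all squarefree monomials of
degree `k` (so `e_0 = 1`). -/
noncomputable def esymm (k : ℕ) : SymF :=
  fun d : ℕ →₀ ℕ =>
    if (d.sum fun _ e => e) = k ∧ ∀ i, d i ≤ 1 then (1 : ℚ) else 0

/-- `e_I = e_{i_1} ⋯ e_{i_s}` for a list `I = [i_1, …, i_s]`. -/
noncomputable def esymmProd (I : List ℕ) : SymF := (I.map esymm).prod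

open Classical in
/-- The chromatic symmetric function `X_G = Σ_κ ∏_v x_{κ v}`, summed over proper colorings
`κ : V → ℕ`: the coefficient of the monomial with exponent vector `d` is the number of
proper colorings all of whose color fibres have the sizes recorded by `d`. -/
noncomputable def csf {V : Type} [Finite V] (G : SimpleGraph V) : SymF :=
  fun d : ℕ →₀ ℕ =>
    (({κ : V → ℕ | (∀ v w, G.Adj v w → κ v ≠ κ w) ∧
        ∀ i : ℕ, {v | κ v = i}.ncard = d i}).ncard : ℚ)

/-- `w_I = i_1 ∏_{j ≥ 2} (i_j - 1)`, with `w_ε = 1`. -/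
def wC : List ℕ → ℕ
  | [] => 1
  | h :: t => h * (t.map (· - 1)).prod

/-- The barbell `K(a 1^b c)` on `a + b + c` vertices: a clique on `{0, …, a-1}`, a path
`a-1, a, …, a+b-1`, and a clique on `{a+b-1, …, a+b+c-1}` (the `K`-chain of the
composition `(a, 1, …, 1, c)` with `b` middle parts `1`). -/
def barbellG (a b c : ℕ) : SimpleGraph (Fin (a + b + c)) :=
  SimpleGraph.fromRel (fun i j =>
    ((i : ℕ) < a ∧ (j : ℕ) < a) ∨
    ((i : ℕ) + 1 = (j : ℕ) ∧ a ≤ (j : ℕ) ∧ (j : ℕ) + 1 ≤ a + b) ∨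
    (a + b ≤ (i : ℕ) + 1 ∧ a + b ≤ (j : ℕ) + 1))

/-! ### Sums over compositions -/

/-- The compositions of `n`, encoded as a finite set of lists of positive integers. -/
def compLists (n : ℕ) : Finset (List ℕ) :=
  Finset.univ.image (Composition.blocks (n := n))

lemma mem_compLists {n : ℕ} {l : List ℕ} :
    l ∈ compLists n ↔ (∀ i ∈ l, 0 < i) ∧ l.sum = n := by
  simp only [compLists, Finset.mem_image, Finset.mem_univ, true_and]
  constructor
  · rintro ⟨I, rfl⟩
    exact ⟨fun i hi => I.blocks_pos hi, I.blocks_sum⟩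
  · rintro ⟨h1, h2⟩
    exact ⟨⟨l, fun {i} hi => h1 i hi, h2⟩, rfl⟩

lemma sum_composition {M : Type*} [AddCommMonoid M] (n : ℕ) (f : List ℕ → M) :
    ∑ I : Composition n, f I.blocks = ∑ l ∈ compLists n, f l := by
  rw [compLists, Finset.sum_image]
  intro I _ J _ h
  exact Composition.ext h

lemma sum_compLists_head {M : Type*} [AddCommMonoid M] (m n : ℕ) (hm : 0 < m)
    (f : List ℕ → M) (hf : ∀ l, l.headI ≠ m → f l = 0) :
    ∑ l ∈ compLists (m + n), f l = ∑ l ∈ compLists n, f (m :: l) := by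
  symm
  apply Finset.sum_of_injOn (fun l => m :: l)
  · intro a _ b _ h
    exact (List.cons.inj h).2
  · intro l hl
    simp only [Finset.mem_coe, mem_compLists] at hl ⊢
    refine ⟨?_, ?_⟩
    · intro i hi
      rcases List.mem_cons.1 hi with rfl | hi
      · exact hm
      · exact hl.1 i hi
    · simp [hl.2]
  · intro l hl hl'
    apply hf
    intro h
    apply hl'
    rw [mem_compLists] at hl
    cases l with
    | nil => simp at h; omega
    | cons k t =>
      simp at h
      subst h
      refine ⟨t, ?_, rfl⟩
      simp only [Finset.mem_coe, mem_compLists]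
      refine ⟨fun i hi => hl.1 i (by simp [hi]), ?_⟩
      have := hl.2
      simp at this
      exact this
  · intros; rfl

/-- The involution exchanging the first two parts of a composition. -/
def swapHead : List ℕ → List ℕ
  | x :: y :: l => y :: x :: l
  | l => l

lemma swapHead_swapHead (l : List ℕ) : swapHead (swapHead l) = l := by
  rcases l with _ | ⟨x, _ | ⟨y, l⟩⟩ <;> rfl

lemma swapHead_mem {n : ℕ} {l : List ℕ} (h : l ∈ compLists n) : swapHead l ∈ compLists n := by
  rw [mem_compLists] at h ⊢
  rcases l with _ | ⟨x, _ | ⟨y, l⟩⟩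
  · exact h
  · exact h
  · simp only [swapHead, List.mem_cons, forall_eq_or_imp, List.sum_cons] at h ⊢
    exact ⟨⟨h.1.2.1, h.1.1, h.1.2.2⟩, by omega⟩

lemma sum_compLists_swapHead {M : Type*} [AddCommMonoid M] (n : ℕ) (f : List ℕ → M) :
    ∑ l ∈ compLists n, f l = ∑ l ∈ compLists n, f (swapHead l) := by
  refine Finset.sum_nbij' swapHead swapHead (fun _ => swapHead_mem) (fun _ => swapHead_mem)
    (fun l _ => swapHead_swapHead l) (fun l _ => swapHead_swapHead l) ?_
  intro l _
  rw [swapHead_swapHead]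

lemma getLastI_cons_cons (x y : ℕ) (l : List ℕ) :
    (x :: y :: l).getLastI = (y :: l).getLastI := by
  simp [List.getLastI_eq_getLast?_getD]

section Terms

variable {R : Type*} [CommRing R] [Algebra ℚ R]

/-- The summand indexed by the composition `I` in the `e`-expansion of the barbell
`K(a 1^b c)`, with both sums merged, for an arbitrary sequence `e` of ring elements. -/
noncomputable def term (e : ℕ → R) (a c : ℕ) (I : List ℕ) : R :=
  (if a ≤ I.getLastI ∧ c + 1 ≤ I.headI then (wC I : ℚ) • (I.map e).prod else 0) +
  (if a ≤ I.getLastI ∧ I.headI ≤ c ∧ c < I.tail.headI then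
    (((I.tail.headI : ℚ) - (I.headI : ℚ)) * ((((I.drop 2).map (· - 1)).prod : ℕ) : ℚ)) •
      (I.map e).prod else 0)

lemma term_singleton (e : ℕ → R) (a c x : ℕ) :
    term e a c [x] = if a ≤ x ∧ c < x then (x : R) * e x else 0 := by
  have h1 : [x].getLastI = x := rfl
  have h2 : [x].headI = x := rfl
  have h3 : [x].tail.headI = 0 := rfl
  have h4 : ((wC [x] : ℕ) : ℚ) • (List.map e [x]).prod = (x : R) * e x := by
    simp [wC, Algebra.smul_def]
  unfold term
  rw [h1, h2, h3, h4, if_neg (c := a ≤ x ∧ x ≤ c ∧ c < 0) (by omega), add_zero]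
  rfl

lemma term_cons_cons (e : ℕ → R) (a c x y : ℕ) (l : List ℕ) :
    term e a c (x :: y :: l) =
      if a ≤ (y :: l).getLastI then
        (if c < x then (x : R) * ((y - 1 : ℕ) : R) else if c < y then (y : R) - x else 0) *
          (((l.map (· - 1)).prod : ℕ) : R) * (e x * (e y * (l.map e).prod))
      else 0 := by
  have h2 : (x :: y :: l).headI = x := rfl
  have h3 : (x :: y :: l).tail.headI = y := rfl
  have h5 : (x :: y :: l).drop 2 = l := rfl
  have h4 : wC (x :: y :: l) = x * ((y - 1) * (l.map (· - 1)).prod) := rfl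
  unfold term
  rw [getLastI_cons_cons, h2, h3, h4, h5]
  simp only [List.map_cons, List.prod_cons]
  generalize (l.map (· - 1)).prod = P
  generalize (l.map e).prod = Q
  by_cases hA : a ≤ (y :: l).getLastI
  · simp only [hA, true_and, if_true]
    by_cases hx : c < x
    · rw [if_pos (show c + 1 ≤ x from hx), if_neg (by omega), if_pos hx]
      simp only [Algebra.smul_def, map_natCast]
      push_cast
      ring
    · rw [if_neg (show ¬ c + 1 ≤ x from hx), if_neg hx]
      by_cases hy : c < y
      · rw [if_pos (by omega), if_pos hy]
        simp only [Algebra.smul_def, map_mul, map_sub, map_natCast]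
        ring
      · rw [if_neg (by omega), if_neg hy]
        ring
  · simp [hA]

/-- The part of `term e a c - term e a (c + 1)` carried by compositions with first part
`c + 1`. -/
noncomputable def diffHead (e : ℕ → R) (a c : ℕ) (I : List ℕ) : R :=
  if I.headI = c + 1 then term e a c I - term e a (c + 1) I else 0

/-- The rest of `term e a c - term e a (c + 1)`; it is carried by compositions with second
part `c + 1`. -/
noncomputable def diffTail (e : ℕ → R) (a c : ℕ) (I : List ℕ) : R :=
  if I.headI = c + 1 then 0 else term e a c I - term e a (c + 1) I

lemma diffTail_swapHead (e : ℕ → R) (a c : ℕ) (l : List ℕ) (h : l.headI ≠ c + 1) :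
    diffTail e a c (swapHead l) = 0 := by
  rcases l with _ | ⟨x, _ | ⟨y, l⟩⟩
  · simp [swapHead, diffTail, term]
  · have h : x ≠ c + 1 := h
    have h1 : c + 1 < x ↔ c < x := by omega
    simp only [swapHead, diffTail, term_singleton, h1]
    simp
  · have h : x ≠ c + 1 := h
    have h1 : c + 1 < x ↔ c < x := by omega
    simp only [swapHead, diffTail, term_cons_cons, h1]
    by_cases hy : y = c + 1
    · exact if_pos hy
    · have h2 : c + 1 < y ↔ c < y := by omega
      simp [h2]

/-- The contributions of `(c + 1) J` and of the composition obtained from it by exchanging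
the first two parts add up to a multiple of the lollipop term of `J`, because
`(c + 1) (j - 1) - (j - (c + 1)) = c j`. -/
lemma diff_pointwise (e : ℕ → R) (a c n : ℕ) (han : a ≤ n) (hn : 0 < n) (J : List ℕ)
    (hJ : J ∈ compLists n) :
    diffHead e a c ((c + 1) :: J) + diffTail e a c (swapHead ((c + 1) :: J)) =
      (c : R) * e (c + 1) * term e a 0 J := by
  rw [mem_compLists] at hJ
  obtain ⟨hpos, hsum⟩ := hJ
  rcases J with _ | ⟨j, t⟩
  · simp at hsum; omega
  have hj : 0 < j := hpos j (by simp)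
  obtain ⟨k, rfl⟩ : ∃ k, j = k + 1 := ⟨j - 1, by omega⟩
  have hh : diffHead e a c ((c + 1) :: (k + 1) :: t) =
    term e a c ((c + 1) :: (k + 1) :: t) - term e a (c + 1) ((c + 1) :: (k + 1) :: t) :=
    if_pos rfl
  have ht : diffTail e a c (swapHead ((c + 1) :: (k + 1) :: t)) =
      if k + 1 = c + 1 then 0 else
        term e a c ((k + 1) :: (c + 1) :: t) - term e a (c + 1) ((k + 1) :: (c + 1) :: t) := rfl
  rw [hh, ht]
  rcases t with _ | ⟨y, t⟩
  · have hn' : a ≤ k + 1 := by simp at hsum; omega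
    have l1 : [k + 1].getLastI = k + 1 := rfl
    have l2 : [c + 1].getLastI = c + 1 := rfl
    simp only [term_cons_cons, term_singleton, l1, l2, hn', if_true]
    rcases lt_trichotomy k c with h | rfl | h
    · have : a ≤ c + 1 := by omega
      simp [this, h.ne, show ¬ c < k + 1 by omega,
        show ¬ c + 1 < k + 1 by omega]
      ring
    · simp
      ring
    · simp [h.ne', h, show c < k + 1 by omega]
      ring
  · simp only [term_cons_cons, getLastI_cons_cons, List.map_cons, List.prod_cons]
    generalize (t.map (· - 1)).prod = P
    generalize (t.map e).prod = Q
    by_cases hA : a ≤ (y :: t).getLastI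
    · rcases lt_trichotomy k c with h | rfl | h
      · simp [hA, h.ne, show ¬ c < k + 1 by omega, show ¬ c + 1 < k + 1 by omega]
        ring
      · simp [hA]
        ring
      · simp [hA, h.ne', h, show c < k + 1 by omega]
        ring
    · simp [hA]

/-- The right-hand side counterpart of the recursion for barbells: the size `c + 1 + n` is
fixed and `c` increases. -/
lemma sum_term_succ (e : ℕ → R) (a c n : ℕ) (han : a ≤ n) (hn : 0 < n) :
    ∑ l ∈ compLists (c + 1 + n), term e a c l =
      (c : R) * e (c + 1) * ∑ l ∈ compLists n, term e a 0 l +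
        ∑ l ∈ compLists (c + 1 + n), term e a (c + 1) l := by
  rw [← sub_eq_iff_eq_add, ← Finset.sum_sub_distrib]
  have hsplit : ∀ l, term e a c l - term e a (c + 1) l = diffHead e a c l + diffTail e a c l := by
    intro l
    unfold diffHead diffTail
    split_ifs <;> simp
  simp only [hsplit]
  rw [Finset.sum_add_distrib, sum_compLists_swapHead (c + 1 + n) (diffTail e a c),
    sum_compLists_head (c + 1) n (Nat.succ_pos c) (diffHead e a c) (fun l hl => if_neg hl),
    sum_compLists_head (c + 1) n (Nat.succ_pos c) (fun l => diffTail e a c (swapHead l))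
      (fun l hl => diffTail_swapHead e a c l hl),
    ← Finset.sum_add_distrib, Finset.mul_sum]
  exact Finset.sum_congr rfl fun J hJ => diff_pointwise e a c n han hn J hJ

/-- For two cliques sharing a vertex only the compositions `(n)` and `(i, n - i)` contribute;
allowing `i ≥ a` adds terms that cancel under `i ↦ n - i`. -/
lemma sum_term_base (e : ℕ → R) (he : e 0 = 1) (a c : ℕ) (ha : 0 < a) :
    ∑ l ∈ compLists (a + c), term e a c l =
      ∑ i ∈ Finset.range (c + 1), (((a + c : ℕ) : R) - 2 * i) * (e i * e (a + c - i)) := by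
  have hanti : ∑ i ∈ (Finset.range (c + 1)).filter (fun i => ¬ i < a),
      (((a + c : ℕ) : R) - 2 * i) * (e i * e (a + c - i)) = 0 := by
    set S := ∑ i ∈ (Finset.range (c + 1)).filter (fun i => ¬ i < a),
      (((a + c : ℕ) : R) - 2 * i) * (e i * e (a + c - i)) with hS
    have h : S = -S := by
      conv_rhs => rw [hS, ← Finset.sum_neg_distrib]
      refine Finset.sum_nbij' (fun i => a + c - i) (fun i => a + c - i) ?_ ?_ ?_ ?_ ?_
      · intro i hi; simp at hi ⊢; omega
      · intro i hi; simp at hi ⊢; omega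
      · intro i hi; simp at hi ⊢; omega
      · intro i hi; simp at hi ⊢; omega
      · intro i hi
        simp at hi
        have h1 : a + c - (a + c - i) = i := by omega
        rw [h1, Nat.cast_sub (by omega)]
        ring
    have h2 : (2 : ℚ) • S = 0 := by
      rw [two_smul]
      nth_rw 1 [h]
      simp
    simpa using h2
  rw [← Finset.sum_filter_add_sum_filter_not (Finset.range (c + 1)) (fun i => i < a), hanti,
    add_zero]
  symm
  have hlast : ∀ (l : List ℕ), l ≠ [] → l.getLastI ≤ l.sum := by
    intro l hl
    rw [List.getLastI_eq_getLast?_getD, List.getLast?_eq_some_getLast hl]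
    exact List.le_sum_of_mem (List.getLast_mem hl)
  -- The index `0` stands for the one-part composition, as `e 0 = 1`.
  apply Finset.sum_of_injOn (fun i => if i = 0 then [a + c] else [i, a + c - i])
  · intro i hi j hj h
    simp only at h
    split_ifs at h with h1 h2 h2 <;> simp at h
    · omega
    · omega
  · intro i hi
    simp only [Finset.coe_filter, Finset.mem_range, Set.mem_ofPred_eq] at hi
    simp only [Finset.mem_coe, mem_compLists]
    split_ifs with h
    · simp; omega
    · simp; omega
  · intro l hl hl'
    rw [mem_compLists] at hl
    obtain ⟨hpos, hsum⟩ := hl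
    simp only [Finset.coe_filter, Finset.mem_range, Set.mem_image, Set.mem_ofPred_eq,
      not_exists, not_and] at hl'
    rcases l with _ | ⟨x, _ | ⟨y, l⟩⟩
    · simp at hsum; omega
    · simp at hsum
      exact absurd (by simp [hsum]) (hl' 0 (by omega))
    · have hx : 0 < x := hpos x (by simp)
      rw [term_cons_cons]
      by_cases hA : a ≤ (y :: l).getLastI
      · rw [if_pos hA]
        have := hlast (y :: l) (by simp)
        simp only [List.sum_cons] at hsum this
        rw [if_neg (by omega)]
        by_cases hy : c < y
        · exfalso
          rcases l with _ | ⟨z, l⟩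
          · have hA : a ≤ y := hA
            simp at hsum
            refine hl' x (by omega) ?_
            rw [if_neg (by omega)]
            simp
            omega
          -- With three parts or more, second and last part already exceed `a + c`.
          · have := hlast (z :: l) (by simp)
            rw [getLastI_cons_cons] at hA
            simp only [List.sum_cons] at hsum this
            omega
        · simp [hy]
      · rw [if_neg hA]
  · intro i hi
    simp only [Finset.mem_filter, Finset.mem_range] at hi
    by_cases h : i = 0
    · subst h
      rw [if_pos rfl, term_singleton, if_pos (by omega), he]
      simp
    · have h1 : [a + c - i].getLastI = a + c - i := rfl
      rw [if_neg h, term_cons_cons, h1, if_pos (by omega), if_neg (by omega), if_pos (by omega),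
        Nat.cast_sub (by omega)]
      simp
      ring

end Terms

/-! ### Elementary symmetric polynomials of finitely many variables -/

section Elem

variable {R σ : Type*} [CommRing R]

/-- The elementary symmetric polynomial of degree `k` in the variables `x i`, `i ∈ t`. -/
def elem (x : σ → R) (t : Finset σ) (k : ℕ) : R :=
  ∑ u ∈ t.powersetCard k, ∏ i ∈ u, x i

lemma elem_zero (x : σ → R) (t : Finset σ) : elem x t 0 = 1 := by
  simp [elem]

variable [DecidableEq σ]

lemma elem_insert (x : σ → R) (t : Finset σ) (i : σ) (hi : i ∉ t) (k : ℕ) :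
    elem x (insert i t) (k + 1) = elem x t (k + 1) + x i * elem x t k := by
  have hmem : ∀ u ∈ t.powersetCard k, i ∉ u := fun u hu h =>
    hi ((Finset.mem_powersetCard.1 hu).1 h)
  unfold elem
  rw [Finset.powersetCard_succ_insert hi, Finset.sum_union, Finset.sum_image, Finset.mul_sum]
  · congr 1
    exact Finset.sum_congr rfl fun u hu => Finset.prod_insert (hmem u hu)
  · intro u hu v hv h
    rw [← Finset.erase_insert (hmem u hu), h, Finset.erase_insert (hmem v hv)]
  · rw [Finset.disjoint_left]
    intro u hu hu'
    obtain ⟨v, _, rfl⟩ := Finset.mem_image.1 hu'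
    exact hi ((Finset.mem_powersetCard.1 hu).1 (Finset.mem_insert_self i v))

lemma elem_erase (x : σ → R) (t : Finset σ) (i : σ) (hi : i ∈ t) (k : ℕ) :
    elem x t (k + 1) = elem x (t.erase i) (k + 1) + x i * elem x (t.erase i) k := by
  rw [← elem_insert x _ i (Finset.notMem_erase i t), Finset.insert_erase hi]

lemma sum_mul_elem_erase (x : σ → R) (t : Finset σ) (k : ℕ) :
    ∑ i ∈ t, x i * elem x (t.erase i) k = ((k : R) + 1) * elem x t (k + 1) := by
  induction t using Finset.induction_on generalizing k with
  | empty =>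
    have : (∅ : Finset σ).powersetCard (k + 1) = ∅ := Finset.powersetCard_eq_empty.2 (by simp)
    simp [elem, this]
  | insert a t ha ih =>
    rw [Finset.sum_insert ha, Finset.erase_insert ha, elem_insert x t a ha]
    have h : ∀ i ∈ t, (insert a t).erase i = insert a (t.erase i) := by
      intro i hi
      rw [Finset.erase_insert_of_ne]
      rintro rfl
      exact ha hi
    rw [Finset.sum_congr rfl fun i hi => by rw [h i hi]]
    cases k with
    | zero =>
      have := ih 0
      simp only [elem_zero] at this ⊢
      rw [this]
      push_cast
      ring
    | succ k =>
      have h2 : ∀ i ∈ t, x i * elem x (insert a (t.erase i)) (k + 1) =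
          x i * elem x (t.erase i) (k + 1) + x a * (x i * elem x (t.erase i) k) := by
        intro i hi
        rw [elem_insert x _ a (by simp [ha])]
        ring
      rw [Finset.sum_congr rfl h2, Finset.sum_add_distrib, ← Finset.mul_sum, ih, ih]
      push_cast
      ring

variable [Fintype σ]

/-- The weighted count of injective colorings of a clique, by choosing the colors one by one. -/
lemma sum_injective (x : σ → R) (c : ℕ) (t : Finset σ) :
    ∑ κ : Fin c → σ, (if Function.Injective κ ∧ ∀ v, κ v ∈ t then ∏ v, x (κ v) else 0) =
      (c.factorial : R) * elem x t c := by
  classical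
  induction c generalizing t with
  | zero =>
    simp [elem_zero, Function.injective_of_subsingleton]
  | succ c ih =>
    rw [← (Fin.consEquiv (fun _ => σ)).sum_comp, Fintype.sum_prod_type]
    have h : ∀ i : σ, (∑ κ : Fin c → σ,
        if Function.Injective (Fin.consEquiv (fun _ => σ) (i, κ)) ∧
          ∀ v, Fin.consEquiv (fun _ => σ) (i, κ) v ∈ t then
          ∏ v, x (Fin.consEquiv (fun _ => σ) (i, κ) v) else 0) =
        if i ∈ t then x i * ((c.factorial : R) * elem x (t.erase i) c) else 0 := by
      intro i
      split_ifs with hi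
      · rw [← ih, Finset.mul_sum]
        refine Finset.sum_congr rfl fun κ _ => ?_
        rw [mul_ite, mul_zero]
        have : (Function.Injective (Fin.consEquiv (fun _ => σ) (i, κ)) ∧
          ∀ v, Fin.consEquiv (fun _ => σ) (i, κ) v ∈ t) ↔
          (Function.Injective κ ∧ ∀ v, κ v ∈ t.erase i) := by
          simp only [Fin.consEquiv, Equiv.coe_fn_mk, Fin.cons_injective_iff, Fin.forall_fin_succ,
            Fin.cons_zero, Fin.cons_succ, Finset.mem_erase, Set.mem_range, not_exists]
          constructor
          · rintro ⟨⟨h1, h2⟩, _, h3⟩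
            exact ⟨h2, fun v => ⟨h1 v, h3 v⟩⟩
          · rintro ⟨h1, h2⟩
            exact ⟨⟨fun v => (h2 v).1, h1⟩, hi, fun v => (h2 v).2⟩
        simp only [this]
        refine if_congr Iff.rfl ?_ rfl
        rw [Fin.prod_univ_succ]
        rfl
      · refine Finset.sum_eq_zero fun κ _ => if_neg ?_
        rintro ⟨_, h⟩
        exact hi (h 0)
    simp only [h]
    rw [← Finset.sum_filter, Finset.filter_mem_eq_inter, Finset.univ_inter]
    calc ∑ i ∈ t, x i * ((c.factorial : R) * elem x (t.erase i) c)
        = (c.factorial : R) * ∑ i ∈ t, x i * elem x (t.erase i) c := by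
          rw [Finset.mul_sum]
          exact Finset.sum_congr rfl fun i _ => by ring
      _ = _ := by
          rw [sum_mul_elem_erase, Nat.factorial_succ]
          push_cast
          ring

/-! ### Colorings of lollipops and barbells -/

/-- Properness of a coloring of the lollipop `K((m+1) 1^b)`: injective on the clique
`{0, …, m}`, and distinct on consecutive vertices of the path `m, …, m + b`. -/
def LolliProper (m b : ℕ) (κ : Fin (m + 1 + b) → σ) : Prop :=
  (∀ i j : Fin (m + 1 + b), (i : ℕ) < m + 1 → (j : ℕ) < m + 1 → i ≠ j → κ i ≠ κ j) ∧
  (∀ i j : Fin (m + 1 + b), (i : ℕ) + 1 = j → m + 1 ≤ (j : ℕ) → κ i ≠ κ j)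

/-- The last vertex of the path of the lollipop. -/
def endV (m b : ℕ) : Fin (m + 1 + b) := ⟨m + b, by omega⟩

open Classical in
/-- The generating function of the proper colorings of the lollipop `K((m+1) 1^b)` whose last
vertex has color `i`. -/
noncomputable def lolli (x : σ → R) (m b : ℕ) (i : σ) : R :=
  ∑ κ : Fin (m + 1 + b) → σ,
    if LolliProper m b κ ∧ κ (endV m b) = i then ∏ v, x (κ v) else 0

/-- A coloring of the clique is a last color `i` and an injective coloring avoiding `i`. -/
lemma lolli_zero (x : σ → R) (m : ℕ) (i : σ) :
    lolli x m 0 i = (m.factorial : R) * (x i * elem x (Finset.univ.erase i) m) := by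
  classical
  unfold lolli
  rw [mul_left_comm, ← sum_injective, Finset.mul_sum]
  change ∑ κ : Fin (m + 1) → σ, _ = _
  rw [← (Fin.snocEquiv (fun _ => σ)).sum_comp, Fintype.sum_prod_type,
    Finset.sum_eq_single_of_mem i (Finset.mem_univ i)]
  · refine Finset.sum_congr rfl fun κ _ => ?_
    rw [mul_ite, mul_zero]
    refine if_congr ?_ ?_ rfl
    · have h1 : LolliProper m 0 (Fin.snocEquiv (fun _ => σ) (i, κ)) ↔
          Function.Injective (Fin.snoc (α := fun _ => σ) κ i) := by
        constructor
        · rintro ⟨h, _⟩ u v huv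
          by_contra hne
          exact h u v u.2 v.2 hne huv
        · intro h
          refine ⟨fun u v _ _ hne huv => hne (h huv), fun u v _ h3 => ?_⟩
          have := v.2
          omega
      have h2 : (Fin.snocEquiv (fun _ => σ) (i, κ)) (endV m 0) = i :=
        Fin.snoc_last (α := fun _ => σ) i κ
      rw [h1, Fin.snoc_injective_iff]
      simp [h2]
    · change ∏ v : Fin (m + 1), _ = _
      rw [Fin.prod_univ_castSucc, mul_comm]
      simp [Fin.snocEquiv]
  · intro j _ hj
    refine Finset.sum_eq_zero fun κ _ => if_neg ?_
    rintro ⟨_, h⟩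
    exact hj ((Fin.snoc_last (α := fun _ => σ) j κ).symm.trans h)

/-- Removing the last vertex of the path: its color is any color but that of its neighbor. -/
lemma lolli_succ (x : σ → R) (m b : ℕ) (i : σ) :
    lolli x m (b + 1) i = x i * (∑ j, lolli x m b j - lolli x m b i) := by
  classical
  have hsum : ∑ j, lolli x m b j - lolli x m b i = ∑ κ : Fin (m + 1 + b) → σ,
      if LolliProper m b κ ∧ κ (endV m b) ≠ i then ∏ v, x (κ v) else 0 := by
    unfold lolli
    rw [Finset.sum_comm, ← Finset.sum_sub_distrib]
    refine Finset.sum_congr rfl fun κ _ => ?_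
    by_cases h : LolliProper m b κ
    · by_cases h2 : κ (endV m b) = i <;> simp [h, h2]
    · simp [h]
  have hlast : ∀ (i : σ) (κ : Fin (m + 1 + b) → σ) (v : Fin (m + 1 + (b + 1))),
      (v : ℕ) = m + 1 + b → (Fin.snocEquiv (fun _ => σ) (i, κ)) v = i := by
    intro i κ v hv
    obtain rfl : v = Fin.last (m + 1 + b) := Fin.ext hv
    exact Fin.snoc_last (α := fun _ => σ) i κ
  have hend : ∀ (i : σ) (κ : Fin (m + 1 + b) → σ),
      (Fin.snocEquiv (fun _ => σ) (i, κ)) (endV m (b + 1)) = i := fun i κ =>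
    hlast i κ _ (by simp only [endV]; omega)
  rw [hsum, Finset.mul_sum]
  unfold lolli
  change ∑ κ : Fin (m + 1 + b + 1) → σ, _ = _
  rw [← (Fin.snocEquiv (fun _ => σ)).sum_comp, Fintype.sum_prod_type,
    Finset.sum_eq_single_of_mem i (Finset.mem_univ i)]
  · refine Finset.sum_congr rfl fun κ _ => ?_
    rw [mul_ite, mul_zero]
    refine if_congr ?_ ?_ rfl
    · have hl := hlast i κ
      have h2 := hend i κ
      have hc : ∀ (v : Fin (m + 1 + (b + 1))) (hv : (v : ℕ) < m + 1 + b),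
          (Fin.snocEquiv (fun _ => σ) (i, κ)) v = κ ⟨v, hv⟩ := by
        intro v hv
        exact Fin.snoc_castSucc (α := fun _ => σ) i κ ⟨v, hv⟩
      rw [h2]
      simp only [and_true]
      constructor
      · rintro ⟨h3, h4⟩
        refine ⟨⟨fun u v hu hv huv => ?_, fun u v huv hv => ?_⟩, ?_⟩
        · have := h3 ⟨u, by omega⟩ ⟨v, by omega⟩ hu hv (by simpa [Fin.ext_iff] using huv)
          rwa [hc _ u.2, hc _ v.2] at this
        · have := h4 ⟨u, by omega⟩ ⟨v, by omega⟩ huv hv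
          rwa [hc _ u.2, hc _ v.2] at this
        · have := h4 ⟨m + b, by omega⟩ ⟨m + 1 + b, by omega⟩ (by simp; omega) (by simp)
          rwa [hc _ (by simp), hl _ rfl] at this
      · rintro ⟨⟨h3, h4⟩, h5⟩
        refine ⟨fun u v hu hv huv => ?_, fun u v huv hv => ?_⟩
        · rw [hc u (by omega), hc v (by omega)]
          exact h3 _ _ hu hv (by simpa [Fin.ext_iff] using huv)
        · have := v.2
          rw [hc u (by omega)]
          by_cases hvl : (v : ℕ) = m + 1 + b
          · rw [hl v hvl]
            have : (⟨u, by omega⟩ : Fin (m + 1 + b)) = endV m b := by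
              apply Fin.ext
              simp [endV]
              omega
            rwa [this]
          · rw [hc v (by omega)]
            exact h4 _ _ huv hv
    · change ∏ v : Fin (m + 1 + b + 1), _ = _
      rw [Fin.prod_univ_castSucc, mul_comm]
      simp [Fin.snocEquiv]
  · intro j _ hj
    refine Finset.sum_eq_zero fun κ _ => if_neg ?_
    rintro ⟨_, h⟩
    exact hj ((hend j κ).symm.trans h)

/-- The generating function of the proper colorings of the barbell `K((m+1) 1^b c)`, divided
by `c!`: the `c` new clique vertices avoid the color `i` of the shared vertex. -/
noncomputable def barb (x : σ → R) (m b c : ℕ) : R :=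
  ∑ i, lolli x m b i * elem x (Finset.univ.erase i) c

lemma barb_zero_right (x : σ → R) (m b : ℕ) : barb x m b 0 = ∑ i, lolli x m b i := by
  simp [barb, elem_zero]

/-- The recursion trading a path vertex for a clique vertex. It comes from
`x_i e_c(x ∖ x_i) = e_{c+1}(x) - e_{c+1}(x ∖ x_i)`. -/
lemma barb_succ (x : σ → R) (m b c : ℕ) :
    barb x m (b + 1) c =
      (c : R) * elem x Finset.univ (c + 1) * barb x m b 0 + barb x m b (c + 1) := by
  rw [barb_zero_right]
  unfold barb
  set S := ∑ i, lolli x m b i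
  have h : ∀ i, lolli x m (b + 1) i * elem x (Finset.univ.erase i) c =
      S * (x i * elem x (Finset.univ.erase i) c) - elem x Finset.univ (c + 1) * lolli x m b i +
        lolli x m b i * elem x (Finset.univ.erase i) (c + 1) := by
    intro i
    rw [lolli_succ, elem_erase x Finset.univ i (Finset.mem_univ i) c]
    ring
  simp only [h]
  rw [Finset.sum_add_distrib, Finset.sum_sub_distrib, ← Finset.mul_sum, ← Finset.mul_sum,
    sum_mul_elem_erase]
  ring

/-- Two cliques sharing a vertex, from
`M(p, q + 1) - M(p + 1, q) = (p - q) e_{p + 1} e_{q + 1}`, where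
`M(p, q) = ∑ x_i e_p(x ∖ x_i) e_q(x ∖ x_i)`. -/
lemma barb_base_aux (x : σ → R) (q p : ℕ) :
    ∑ i, x i * elem x (Finset.univ.erase i) p * elem x (Finset.univ.erase i) q =
      ∑ j ∈ Finset.range (q + 1), (((p + 1 + q : ℕ) : R) - 2 * j) *
        (elem x Finset.univ j * elem x Finset.univ (p + 1 + q - j)) := by
  induction q generalizing p with
  | zero =>
    simp [elem_zero, sum_mul_elem_erase]
  | succ q ih =>
    have ih' := ih (p + 1)
    rw [Finset.sum_range_succ, show p + 1 + (q + 1) = p + 1 + 1 + q by omega, ← ih',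
      show p + 1 + 1 + q - (q + 1) = p + 1 by omega]
    have h1 : ∀ i, x i * elem x (Finset.univ.erase i) p * elem x (Finset.univ.erase i) (q + 1) =
        x i * elem x (Finset.univ.erase i) (p + 1) * elem x (Finset.univ.erase i) q +
        (elem x Finset.univ (q + 1) * (x i * elem x (Finset.univ.erase i) p) -
          elem x Finset.univ (p + 1) * (x i * elem x (Finset.univ.erase i) q)) := by
      intro i
      rw [elem_erase x Finset.univ i (Finset.mem_univ i) p,
        elem_erase x Finset.univ i (Finset.mem_univ i) q]
      ring
    simp only [h1]
    rw [Finset.sum_add_distrib, Finset.sum_sub_distrib, ← Finset.mul_sum, ← Finset.mul_sum,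
      sum_mul_elem_erase, sum_mul_elem_erase]
    push_cast
    ring

lemma barb_zero (x : σ → R) (m c : ℕ) :
    barb x m 0 c = (m.factorial : R) *
      ∑ j ∈ Finset.range (c + 1), (((m + 1 + c : ℕ) : R) - 2 * j) *
        (elem x Finset.univ j * elem x Finset.univ (m + 1 + c - j)) := by
  rw [← barb_base_aux, Finset.mul_sum]
  unfold barb
  refine Finset.sum_congr rfl fun i _ => ?_
  rw [lolli_zero]
  ring

/-- The `e`-expansion of `barb`, both sides being determined by the same recursion in `b`. -/
theorem barb_eq [Algebra ℚ R] (x : σ → R) (m b c : ℕ) :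
    barb x m b c = (m.factorial : R) *
      ∑ l ∈ compLists (m + 1 + b + c), term (elem x Finset.univ) (m + 1) c l := by
  induction b generalizing c with
  | zero =>
    rw [barb_zero, add_zero, sum_term_base _ (elem_zero x _) _ _ (Nat.succ_pos m)]
  | succ b ih =>
    rw [barb_succ, ih, ih, show m + 1 + (b + 1) + c = c + 1 + (m + 1 + b) by omega,
      sum_term_succ _ _ _ _ (by omega) (by omega), add_zero,
      show m + 1 + b + (c + 1) = c + 1 + (m + 1 + b) by omega]
    ring

open Classical in
/-- Splitting a proper coloring of the barbell into a proper coloring of the lollipop and an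
injective coloring of the `c` new clique vertices avoiding the color of the shared vertex. -/
lemma sum_barbell (x : σ → R) (m b c : ℕ) :
    ∑ κ : Fin (m + 1 + b + c) → σ,
      (if ∀ v w, (barbellG (m + 1) b c).Adj v w → κ v ≠ κ w then ∏ v, x (κ v) else 0) =
    (c.factorial : R) * barb x m b c := by
  classical
  have hR : (c.factorial : R) * barb x m b c = ∑ κ : Fin (m + 1 + b) → σ,
      ∑ μ : Fin c → σ, if LolliProper m b κ ∧ Function.Injective μ ∧
        ∀ v, μ v ∈ Finset.univ.erase (κ (endV m b)) then
        (∏ v, x (κ v)) * ∏ v, x (μ v) else 0 := by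
    have h1 : ∀ κ : Fin (m + 1 + b) → σ, (∑ μ : Fin c → σ,
        if LolliProper m b κ ∧ Function.Injective μ ∧
        ∀ v, μ v ∈ Finset.univ.erase (κ (endV m b)) then
        (∏ v, x (κ v)) * ∏ v, x (μ v) else 0) =
        ∑ i, (if LolliProper m b κ ∧ κ (endV m b) = i then ∏ v, x (κ v) else 0) *
          ((c.factorial : R) * elem x (Finset.univ.erase i) c) := by
      intro κ
      by_cases h : LolliProper m b κ
      · simp only [h, true_and, ite_mul, zero_mul, Finset.sum_ite_eq, Finset.mem_univ, if_true]
        rw [← sum_injective, Finset.mul_sum]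
        exact Finset.sum_congr rfl fun μ _ => by rw [mul_ite, mul_zero]
      · simp [h]
    simp only [h1]
    rw [Finset.sum_comm]
    unfold barb lolli
    rw [Finset.mul_sum]
    refine Finset.sum_congr rfl fun i _ => ?_
    rw [← Finset.sum_mul]
    ring
  rw [hR, ← (Fin.appendEquiv (m + 1 + b) c).sum_comp, Fintype.sum_prod_type]
  refine Finset.sum_congr rfl fun κ _ => Finset.sum_congr rfl fun μ _ => ?_
  refine if_congr ?_ ?_ rfl
  · have hl : ∀ (v : Fin (m + 1 + b + c)) (hv : (v : ℕ) < m + 1 + b),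
        Fin.appendEquiv (m + 1 + b) c (κ, μ) v = κ ⟨v, hv⟩ := fun v hv =>
      Fin.append_left κ μ ⟨v, hv⟩
    have hr : ∀ (v : Fin (m + 1 + b + c)) (j : Fin c), (v : ℕ) = m + 1 + b + j →
        Fin.appendEquiv (m + 1 + b) c (κ, μ) v = μ j := by
      intro v j hv
      obtain rfl : v = Fin.natAdd (m + 1 + b) j := Fin.ext hv
      exact Fin.append_right κ μ j
    simp only [barbellG, SimpleGraph.fromRel_adj]
    constructor
    · intro h
      refine ⟨⟨fun u v hu hv huv => ?_, fun u v huv hv => ?_⟩, fun u v huv => ?_, fun v => ?_⟩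
      · have := h ⟨u, by omega⟩ ⟨v, by omega⟩
          ⟨by simpa [Fin.ext_iff] using huv, Or.inl (Or.inl ⟨hu, hv⟩)⟩
        rwa [hl _ u.2, hl _ v.2] at this
      · have := h ⟨u, by omega⟩ ⟨v, by omega⟩
          ⟨by simp only [ne_eq, Fin.mk.injEq]; omega,
            Or.inl (Or.inr (Or.inl ⟨huv, hv, v.2⟩))⟩
        rwa [hl _ u.2, hl _ v.2] at this
      · by_contra hne
        refine h (Fin.natAdd _ u) (Fin.natAdd _ v)
          ⟨by simpa [Fin.ext_iff] using hne, Or.inl (Or.inr (Or.inr ?_))⟩ ?_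
        · simp only [Fin.val_natAdd]; omega
        · rw [hr _ u rfl, hr _ v rfl, huv]
      · rw [Finset.mem_erase]
        refine ⟨?_, Finset.mem_univ _⟩
        have := h (Fin.natAdd _ v) ⟨m + b, by omega⟩
          ⟨by simp only [ne_eq, Fin.ext_iff, Fin.val_natAdd]; omega,
            Or.inl (Or.inr (Or.inr ?_))⟩
        · rwa [hr _ v rfl, hl _ (by simp)] at this
        · simp only [Fin.val_natAdd]; omega
    · rintro ⟨⟨h1, h2⟩, h3, h4⟩
      have key : ∀ v w : Fin (m + 1 + b + c), v ≠ w →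
          (((v : ℕ) < m + 1 ∧ (w : ℕ) < m + 1) ∨
          ((v : ℕ) + 1 = (w : ℕ) ∧ m + 1 ≤ (w : ℕ) ∧ (w : ℕ) + 1 ≤ m + 1 + b) ∨
          (m + 1 + b ≤ (v : ℕ) + 1 ∧ m + 1 + b ≤ (w : ℕ) + 1)) →
          Fin.appendEquiv (m + 1 + b) c (κ, μ) v ≠ Fin.appendEquiv (m + 1 + b) c (κ, μ) w := by
        have hend : ∀ (v : Fin (m + 1 + b + c)) (j : Fin c), (v : ℕ) = m + b →
            Fin.appendEquiv (m + 1 + b) c (κ, μ) v ≠ μ j := by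
          intro v j hv
          rw [hl v (by omega)]
          have : (⟨v, by omega⟩ : Fin (m + 1 + b)) = endV m b := Fin.ext hv
          rw [this]
          exact (Finset.ne_of_mem_erase (h4 j)).symm
        rintro v w hvw (⟨hv, hw⟩ | ⟨hv, hw, hw'⟩ | ⟨hv, hw⟩)
        · rw [hl v (by omega), hl w (by omega)]
          exact h1 _ _ hv hw (by simpa [Fin.ext_iff] using hvw)
        · rw [hl v (by omega), hl w (by omega)]
          exact h2 _ _ hv hw
        · have hvw' : (v : ℕ) ≠ w := fun h => hvw (Fin.ext h)
          by_cases hv' : (v : ℕ) < m + 1 + b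
          · rw [hr w ⟨w - (m + 1 + b), by omega⟩ (by simp; omega)]
            exact hend v _ (by omega)
          · rw [hr v ⟨v - (m + 1 + b), by omega⟩ (by simp; omega)]
            by_cases hw' : (w : ℕ) < m + 1 + b
            · exact (hend w _ (by omega)).symm
            · rw [hr w ⟨w - (m + 1 + b), by omega⟩ (by simp; omega)]
              intro h
              have := h3 h
              simp at this
              omega
      rintro v w ⟨hne, h | h⟩
      · exact key v w hne h
      · exact (key w v hne.symm h).symm
  · rw [Fin.prod_univ_add]
    simp [Fin.appendEquiv]

end Elem

/-! ### Reduction to finitely many variables -/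

section Reduction

/-- The ideal of power series having no monomial in the variables `x_0, …, x_{N-1}` alone;
passing to the quotient amounts to setting `x_i = 0` for `i ≥ N`. -/
def killIdeal (N : ℕ) : Ideal SymF where
  carrier := {f | ∀ d : ℕ →₀ ℕ, d.support ⊆ Finset.range N → MvPowerSeries.coeff d f = 0}
  zero_mem' := fun d _ => by simp
  add_mem' := fun {f g} hf hg d hd => by rw [map_add, hf d hd, hg d hd, add_zero]
  smul_mem' := fun r f hf d hd => by
    classical
    rw [smul_eq_mul, MvPowerSeries.coeff_mul]
    refine Finset.sum_eq_zero fun p hp => ?_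
    have hle : p.2 ≤ d := by
      rw [← Finset.HasAntidiagonal.mem_antidiagonal.1 hp]
      exact le_add_self
    rw [hf p.2 ((Finsupp.support_mono hle).trans hd), mul_zero]

lemma mk_eq_mk {N : ℕ} {f g : SymF} :
    Ideal.Quotient.mkₐ ℚ (killIdeal N) f = Ideal.Quotient.mkₐ ℚ (killIdeal N) g ↔
      ∀ d : ℕ →₀ ℕ, d.support ⊆ Finset.range N →
        MvPowerSeries.coeff d f = MvPowerSeries.coeff d g := by
  rw [Ideal.Quotient.mkₐ_eq_mk, Ideal.Quotient.eq]
  change (∀ d : ℕ →₀ ℕ, _ → _) ↔ _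
  simp only [map_sub, sub_eq_zero]

/-- Every monomial involves finitely many variables, so equality may be tested in the
quotients by all `killIdeal N`. -/
lemma eq_of_forall_mk {f g : SymF}
    (h : ∀ N, Ideal.Quotient.mkₐ ℚ (killIdeal N) f = Ideal.Quotient.mkₐ ℚ (killIdeal N) g) :
    f = g := by
  ext d
  refine mk_eq_mk.1 (h (d.support.sup id + 1)) d fun i hi => ?_
  rw [Finset.mem_range, Nat.lt_succ_iff]
  exact Finset.le_sup (f := id) hi

/-- The image of the variable `x_i` in the quotient. -/
noncomputable def var (N : ℕ) (i : Fin N) : SymF ⧸ killIdeal N :=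
  Ideal.Quotient.mkₐ ℚ (killIdeal N) (MvPowerSeries.X (i : ℕ))

lemma sum_single_apply {ι : Type*} (u : Finset ι) (κ : ι → ℕ) (j : ℕ) :
    (∑ v ∈ u, Finsupp.single (κ v) 1 : ℕ →₀ ℕ) j = (u.filter fun v => κ v = j).card := by
  classical
  rw [Finsupp.finsetSum_apply, Finset.card_filter]
  exact Finset.sum_congr rfl fun v _ => by rw [Finsupp.single_apply]

lemma coeff_prod_X {N : ℕ} {ι : Type*} (u : Finset ι) (κ : ι → Fin N) (d : ℕ →₀ ℕ) :
    MvPowerSeries.coeff d (∏ v ∈ u, (MvPowerSeries.X ((κ v : ℕ)) : SymF)) =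
      if d = ∑ v ∈ u, Finsupp.single ((κ v : ℕ)) 1 then 1 else 0 := by
  classical
  simp only [MvPowerSeries.X_def]
  rw [MvPowerSeries.prod_monomial, MvPowerSeries.coeff_monomial]
  simp

lemma mk_esymm (N k : ℕ) :
    Ideal.Quotient.mkₐ ℚ (killIdeal N) (esymm k) = elem (var N) Finset.univ k := by
  classical
  have h : elem (var N) Finset.univ k = Ideal.Quotient.mkₐ ℚ (killIdeal N)
      (∑ u ∈ (Finset.univ : Finset (Fin N)).powersetCard k,
        ∏ i ∈ u, (MvPowerSeries.X (i : ℕ) : SymF)) := by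
    simp only [elem, var, map_sum, map_prod]
  rw [h, mk_eq_mk]
  intro d hd
  have hL : MvPowerSeries.coeff d (esymm k) =
      if (d.sum fun _ e => e) = k ∧ ∀ i, d i ≤ 1 then (1 : ℚ) else 0 := by
    change esymm k d = _
    unfold esymm
    congr
  rw [hL, map_sum]
  have hc : ∀ u : Finset (Fin N),
      MvPowerSeries.coeff d (∏ i ∈ u, (MvPowerSeries.X (i : ℕ) : SymF)) =
        if d = ∑ v ∈ u, Finsupp.single (v : ℕ) 1 then 1 else 0 := fun u =>
    coeff_prod_X u id d
  simp only [hc]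
  have hD : ∀ (u : Finset (Fin N)) (i : Fin N),
      (∑ v ∈ u, Finsupp.single (v : ℕ) 1 : ℕ →₀ ℕ) i = if i ∈ u then 1 else 0 := by
    intro u i
    rw [sum_single_apply]
    simp only [← Fin.ext_iff, Finset.filter_eq']
    split_ifs <;> simp
  have hD1 : ∀ (u : Finset (Fin N)) (j : ℕ),
      (∑ v ∈ u, Finsupp.single (v : ℕ) 1 : ℕ →₀ ℕ) j ≤ 1 := by
    intro u j
    by_cases hj : j < N
    · have := hD u ⟨j, hj⟩
      simp only at this
      rw [this]
      split_ifs <;> simp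
    · rw [sum_single_apply, Finset.filter_false_of_mem]
      · simp
      · intro v _ h
        exact hj (h ▸ v.2)
  have hDs : ∀ u : Finset (Fin N),
      ((∑ v ∈ u, Finsupp.single (v : ℕ) 1 : ℕ →₀ ℕ).sum fun _ e => e) = u.card := by
    intro u
    rw [← Finsupp.sum_finsetSum_index (by simp) (by simp)]
    simp
  by_cases hcond : (d.sum fun _ e => e) = k ∧ ∀ i, d i ≤ 1
  · have hdu : d = ∑ v ∈ Finset.univ.filter (fun i : Fin N => d i = 1),
        Finsupp.single (v : ℕ) 1 := by
      ext j
      by_cases hj : j < N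
      · have := hD (Finset.univ.filter (fun i : Fin N => d i = 1)) ⟨j, hj⟩
        simp only at this
        rw [this]
        have := hcond.2 j
        simp only [Finset.mem_filter, Finset.mem_univ, true_and]
        split_ifs <;> omega
      · rw [sum_single_apply, Finset.filter_false_of_mem, Finset.card_empty]
        · by_contra hne
          exact hj (Finset.mem_range.1 (hd (Finsupp.mem_support_iff.2 hne)))
        · intro v _ h
          exact hj (h ▸ v.2)
    rw [if_pos hcond, Finset.sum_eq_single_of_mem (Finset.univ.filter (fun i : Fin N => d i = 1)),
      if_pos hdu]
    · rw [Finset.mem_powersetCard]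
      refine ⟨Finset.subset_univ _, ?_⟩
      rw [← hDs, ← hdu]
      exact hcond.1
    · intro u _ hu
      refine if_neg fun h => hu ?_
      ext i
      rw [Finset.mem_filter, h, hD]
      simp
  · rw [if_neg hcond, Finset.sum_eq_zero]
    intro u hu
    refine if_neg fun h => hcond ?_
    rw [h]
    exact ⟨(hDs u).trans (Finset.mem_powersetCard.1 hu).2, hD1 u⟩

open Classical in
/-- Modulo `killIdeal N`, the chromatic symmetric function is the finite sum over proper
colorings with `N` colors. -/
lemma mk_csf (N : ℕ) {V : Type} [Fintype V] (G : SimpleGraph V) :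
    Ideal.Quotient.mkₐ ℚ (killIdeal N) (csf G) =
      ∑ κ : V → Fin N, if ∀ v w, G.Adj v w → κ v ≠ κ w then ∏ v, var N (κ v) else 0 := by
  have h : (∑ κ : V → Fin N, if ∀ v w, G.Adj v w → κ v ≠ κ w then ∏ v, var N (κ v) else 0) =
      Ideal.Quotient.mkₐ ℚ (killIdeal N)
        (∑ κ ∈ Finset.univ.filter (fun κ : V → Fin N => ∀ v w, G.Adj v w → κ v ≠ κ w),
          ∏ v, (MvPowerSeries.X ((κ v : ℕ)) : SymF)) := by
    rw [Finset.sum_filter, map_sum]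
    refine Finset.sum_congr rfl fun κ _ => ?_
    split_ifs
    · simp only [var, map_prod]
    · simp
  rw [h, mk_eq_mk]
  intro d hd
  rw [map_sum]
  simp only [coeff_prod_X]
  rw [← Finset.sum_filter, Finset.filter_filter, Finset.sum_const, nsmul_eq_mul, mul_one]
  change (csf G) d = _
  unfold csf
  congr 1
  have hcard : ∀ (κ : V → ℕ) (i : ℕ),
      {v | κ v = i}.ncard = (Finset.univ.filter fun v => κ v = i).card := by
    intro κ i
    rw [← Set.ncard_coe_finset]
    simp
  symm
  rw [← Set.ncard_coe_finset]
  refine Set.ncard_congr (fun κ _ v => (κ v : ℕ)) ?_ ?_ ?_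
  · intro κ hκ
    simp only [Finset.coe_filter, Finset.mem_univ, true_and, Set.mem_ofPred_eq] at hκ ⊢
    refine ⟨fun v w hvw h => hκ.1 v w hvw (Fin.ext h), fun i => ?_⟩
    rw [hcard, hκ.2, sum_single_apply]
  · intro κ κ' _ _ hκ
    ext v
    exact congrFun hκ v
  · intro κ hκ
    simp only [Set.mem_ofPred_eq] at hκ
    have hlt : ∀ v, κ v < N := by
      intro v
      refine Finset.mem_range.1 (hd (Finsupp.mem_support_iff.2 ?_))
      rw [← hκ.2, hcard]
      exact Finset.card_ne_zero_of_mem (a := v) (by simp)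
    refine ⟨fun v => ⟨κ v, hlt v⟩, ?_, rfl⟩
    simp only [Finset.coe_filter, Finset.mem_univ, true_and, Set.mem_ofPred_eq]
    refine ⟨fun v w hvw h => hκ.1 v w hvw (Fin.ext_iff.1 h), ?_⟩
    ext i
    rw [sum_single_apply, ← hκ.2, hcard]

end Reduction

/-- For `a ≥ 1`, `b, c ≥ 0` and `n = a + b + c`,
`X_{K(a1^b c)} = (a-1)! c! (Σ_{I ⊨ n, i_{-1} ≥ a, i_1 ≥ c+1} w_I e_I
 + Σ_{I ⊨ n, i_{-1} ≥ a, i_1 ≤ c < i_2} (i_2 - i_1) ∏_{j ≥ 3} (i_j - 1) e_I)`. -/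
theorem stmt_13 (a b c : ℕ) (ha : 1 ≤ a) :
    csf (barbellG a b c) =
      (((a - 1).factorial * c.factorial : ℕ) : ℚ) •
        ((∑ I : Composition (a + b + c),
            if a ≤ I.blocks.getLastI ∧ c + 1 ≤ I.blocks.headI then
              (wC I.blocks : ℚ) • esymmProd I.blocks
            else 0) +
          ∑ I : Composition (a + b + c),
            if a ≤ I.blocks.getLastI ∧ I.blocks.headI ≤ c ∧ c < I.blocks.tail.headI then
              (((I.blocks.tail.headI : ℚ) - (I.blocks.headI : ℚ)) *
                ((((I.blocks.drop 2).map (· - 1)).prod : ℕ) : ℚ)) • esymmProd I.blocks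
            else 0) := by
  classical
  obtain ⟨m, rfl⟩ : ∃ m, a = m + 1 := ⟨a - 1, by omega⟩
  apply eq_of_forall_mk
  intro N
  have hprod : ∀ l : List ℕ, Ideal.Quotient.mkₐ ℚ (killIdeal N) (esymmProd l) =
      (l.map (elem (var N) Finset.univ)).prod := by
    intro l
    rw [esymmProd, map_list_prod, List.map_map]
    congr 2
    ext k
    exact mk_esymm N k
  have hcsf : Ideal.Quotient.mkₐ ℚ (killIdeal N) (csf (barbellG (m + 1) b c)) =
      (c.factorial : SymF ⧸ killIdeal N) * barb (var N) m b c := by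
    rw [mk_csf, ← sum_barbell]
    congr!
  rw [hcsf, barb_eq, Nat.cast_smul_eq_nsmul, map_nsmul, nsmul_eq_mul,
    ← Finset.sum_add_distrib, map_sum, ← sum_composition]
  have hterm : ∀ I : Composition (m + 1 + b + c),
      Ideal.Quotient.mkₐ ℚ (killIdeal N)
        ((if m + 1 ≤ I.blocks.getLastI ∧ c + 1 ≤ I.blocks.headI then
              (wC I.blocks : ℚ) • esymmProd I.blocks
            else 0) +
          if m + 1 ≤ I.blocks.getLastI ∧ I.blocks.headI ≤ c ∧ c < I.blocks.tail.headI then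
              (((I.blocks.tail.headI : ℚ) - (I.blocks.headI : ℚ)) *
                ((((I.blocks.drop 2).map (· - 1)).prod : ℕ) : ℚ)) • esymmProd I.blocks
            else 0) = term (elem (var N) Finset.univ) (m + 1) c I.blocks := by
    intro I
    unfold term
    rw [map_add, ← hprod]
    congr 1
    · split_ifs
      · rw [map_smul]
      · rw [map_zero]
    · split_ifs
      · rw [map_smul]
      · rw [map_zero]
  rw [Finset.sum_congr rfl fun I _ => hterm I]
  push_cast
  ring
end

section
/- Every hat is e-positive: for all integers m ≥ 2 and a, b ≥ 0, all coefficients of the chromatic symmetric function X_{H_{a,m,b}} in the basis of elementary symmetric functions e_λ are nonnegative. -/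
/-!
The vertices of the hat are coloured one after the other, keeping track only of the colour `X` of
the last vertex. So a partial colouring sum is a polynomial in `X` over the symmetric functions, and
appending a vertex acts on it by `step : g ↦ ∑ i, x_i g(x_i) - X g(X)`. The natural basis consists of
the elementary symmetric functions `ê_q` in the variables other than `X` (`omitE`). By Newton's
identities, `step ê_r = ê_{r+1} + r e_{r+1}` (`step_omitE`), and summing over the last colour turns
`ê_r` into `(r + 1) e_{r+1}`. Hence the cone `posCone` spanned by the products `e_λ ê_q` is stable
under `step`, and its elements become `e`-positive once the last colour is summed over (`tr_mem`).

It remains to see that closing a cycle also preserves the cone (`cycle_mem`). The chord of a cycle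
of length `l + 2` attached at a vertex discards from `step^{l+1} g` the colourings in which both ends
of the chord agree, i.e. `g` times the sum `closed (l+1)` over closed colour walks. With `B_n` the
coefficients of `1 / (1 - ∑ (k - 1) e_k z^k)` (`block`), one finds
`step^{l+1} ê_r = ê_{r+l+1} + ∑_{q ≤ s ≤ l} (r + s - q) B_{l-s} e_{r+s+1-q} ê_q` and
`closed (l+1) = X ∑_{s ≤ l} s B_{l-s} ê_s`. The product rule
`X ê_r ê_s = ∑_{q ≤ min(r,s)} (e_{r+s+1-q} ê_q - e_q ê_{r+s+1-q})` makes `ê_r closed (l+1)` comparable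
with the former: for `q ≤ min(r,s)` the coefficient of `B_{l-s} e_{r+s+1-q} ê_q` in the difference is
`(r + s - q) - s = r - q ≥ 0`, and all other terms are visibly nonnegative (`cycle_omitE_mem`).

The combinatorial meaning of these operators is proved for finitely many colours (`sum_hat`), where
all sums are finite; it carries over to power series in countably many variables because a series is
determined by its restrictions to finite sets of variables (`eq_of_restr`, `csf_hat`).
-/

open Finset

/-- The hat `H_{a,m,b}`: the path on vertices `0, 1, …, a+m+b-1` together with the extra
edge joining vertex `a` to vertex `a+m-1` (in 1-indexed terms, the edge `v_{a+1} v_{a+m}`). -/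
def hatG (a m b : ℕ) : SimpleGraph (Fin (a + m + b)) :=
  SimpleGraph.fromRel (fun i j =>
    (i : ℕ) + 1 = (j : ℕ) ∨ ((i : ℕ) = a ∧ (j : ℕ) = a + m - 1))

namespace Hat
open Polynomial

/-! ### The operators on polynomials in the last colour -/

section Algebra
variable {S : Type*} [CommRing S]

/-- `omitE e k` is the `k`-th elementary symmetric function of all variables except `X`, where `X` is
one of the variables, written as a polynomial in `X` over the ring containing the full elementary
symmetric functions `e`. -/
noncomputable def omitE (e : ℕ → S) : ℕ → S[X]
  | 0 => 1
  | k + 1 => C (e (k + 1)) - X * omitE e k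

/-- The `S`-linear map `X ^ k ↦ p (k + 1)`. With `p` the power sums, it is `g ↦ ∑ i, x_i g(x_i)`: it
restores the weight of the last vertex and sums over its colour. -/
noncomputable def tr (p : ℕ → S) : S[X] →ₗ[S] S :=
  Polynomial.lsum fun k => LinearMap.toSpanSingleton S S (p (k + 1))

/-- Attaching a pendant vertex to the last vertex. If `g(X)` enumerates the proper colourings of a
graph whose last vertex has colour `X`, without the weight of that vertex, then
`step p g = tr p g - X g` does so for the graph with one new vertex adjacent to the old last one. -/
noncomputable def step (p : ℕ → S) : Module.End S S[X] :=
  (Algebra.linearMap S S[X]).comp (tr p) - LinearMap.mulLeft S X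

/-- The coefficients of `1 / (1 - ∑ k, (k - 1) e_k z ^ k)`. -/
noncomputable def block (e : ℕ → S) : ℕ → S
  | 0 => 1
  | n + 1 => ∑ k : Fin (n + 1), ((k : ℕ) : S) * e (k + 1) * block e (n - k)

theorem step_apply (p : ℕ → S) (g : S[X]) : step p g = C (tr p g) - X * g := by
  simp [step]

theorem block_succ (e : ℕ → S) (n : ℕ) :
    block e (n + 1) = ∑ k ∈ range (n + 1), (k : S) * e (k + 1) * block e (n - k) := by
  rw [block, Finset.sum_range]

theorem X_mul_omitE (e : ℕ → S) (k : ℕ) :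
    X * omitE e k = C (e (k + 1)) - omitE e (k + 1) := by
  rw [omitE]; ring

/-- Newton's identities relating the elementary symmetric functions `e` and the power sums `p`. In
terms of `omitE`: summing `x_i e_k(all variables but x_i)` over `i` gives `(k + 1) e_{k + 1}`. -/
def IsNewton (e p : ℕ → S) : Prop :=
  ∀ k, tr p (omitE e k) = ((k : S) + 1) * e (k + 1)

variable {e p : ℕ → S}

theorem step_omitE (h : IsNewton e p) (r : ℕ) :
    step p (omitE e r) = omitE e (r + 1) + C ((r : S) * e (r + 1)) := by
  rw [step_apply, h, X_mul_omitE]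
  simp only [C_add, C_mul, C_1, map_natCast]
  ring

theorem step_pow_omitE (h : IsNewton e p) (r l : ℕ) :
    (step p ^ l) (omitE e r) = omitE e (r + l) +
      ∑ j ∈ range l, C (((r + j : ℕ) : S) * e (r + j + 1)) * (step p ^ (l - 1 - j)) 1 := by
  induction l with
  | zero => simp
  | succ l ih =>
    rw [pow_succ', Module.End.mul_apply, ih, map_add, step_omitE h, map_sum,
      sum_range_succ]
    have : ∀ j ∈ range l, step p (C (((r + j : ℕ) : S) * e (r + j + 1)) *
        (step p ^ (l - 1 - j)) 1) =
        C (((r + j : ℕ) : S) * e (r + j + 1)) * (step p ^ (l + 1 - 1 - j)) 1 := by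
      intro j hj
      have hj := mem_range.1 hj
      rw [← smul_eq_C_mul, map_smul, ← Module.End.mul_apply, ← pow_succ', smul_eq_C_mul]
      congr 4
      omega
    rw [sum_congr rfl this, ← add_assoc r l 1]
    simp
    ring

/-- The colourings of a path on `l + 1` vertices whose last vertex has colour `X`. -/
theorem step_pow_one (h : IsNewton e p) (l : ℕ) :
    (step p ^ l) 1 = ∑ q ∈ range (l + 1), C (block e (l - q)) * omitE e q := by
  induction l with
  | zero => simp [block, omitE]
  | succ l ih =>
    rw [pow_succ', Module.End.mul_apply, ih, map_sum, sum_range_succ' _ (l + 1)]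
    have : ∀ q ∈ range (l + 1), step p (C (block e (l - q)) * omitE e q) =
        C (block e (l + 1 - (q + 1))) * omitE e (q + 1) +
          C ((q : S) * e (q + 1) * block e (l - q)) := by
      intro q hq
      rw [← smul_eq_C_mul, map_smul, step_omitE h, smul_eq_C_mul, Nat.add_sub_add_right]
      simp only [C_mul]
      ring
    rw [sum_congr rfl this, sum_add_distrib, ← map_sum, ← block_succ]
    simp [omitE]

/-- `closed p l` enumerates the walks `c = c_0 ≠ c_1 ≠ ⋯ ≠ c_l = c` of colours, where `c` is the colour
`X`, weighted by all of `c_0, …, c_{l - 1}`. In the recursion, `X * (step p ^ l) 1` enumerates,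
after reversal, the walks of `l` steps from `c` to anywhere, and the subtracted term those whose
last colour is already `c`. -/
noncomputable def closed (p : ℕ → S) : ℕ → S[X]
  | 0 => 1
  | l + 1 => X * ((step p ^ l) 1 - closed p l)

/-- The expansion of `closed` differs from that of `X * (step p ^ l) 1` only in the factor `s`. -/
theorem closed_succ (h : IsNewton e p) (l : ℕ) :
    closed p (l + 1) = X * ∑ s ∈ range (l + 1), (s : S[X]) * C (block e (l - s)) * omitE e s := by
  induction l with
  | zero => simp [closed]
  | succ l ih =>
    rw [closed, ih]
    congr 1
    rw [sub_eq_iff_eq_add, step_pow_one h, sum_range_succ' _ (l + 1), sum_range_succ' _ (l + 1),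
      mul_sum, Nat.sub_zero, block_succ, map_sum, omitE, mul_one, Nat.cast_zero, zero_mul, zero_mul,
      add_zero, ← sum_add_distrib, ← sum_add_distrib]
    refine sum_congr rfl fun q _ => ?_
    have := X_mul_omitE e q
    rw [Nat.add_sub_add_right]
    simp only [C_mul, map_natCast, Nat.cast_add, Nat.cast_one]
    linear_combination (-(q : S[X]) * C (block e (l - q))) * this

/-! ### The product rule -/

theorem X_mul_omitE_mul_of_le (he : e 0 = 1) (r s : ℕ) :
    X * omitE e r * omitE e s = ∑ q ∈ range (r + 1),
      (C (e (r + s + 1 - q)) * omitE e q - C (e q) * omitE e (r + s + 1 - q)) := by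
  induction r generalizing s with
  | zero =>
    simp [omitE, he]
  | succ r ih =>
    rw [sum_range_succ, show r + 1 + s + 1 - (r + 1) = s + 1 by omega]
    have h1 := X_mul_omitE e s
    have h2 := X_mul_omitE e r
    have h3 := ih (s + 1)
    rw [show r + (s + 1) + 1 = r + 1 + s + 1 by omega] at h3
    rw [← h3]
    linear_combination omitE e (r + 1) * h1 - omitE e (s + 1) * h2

/-- The product rule: it linearizes products of two `omitE`. The identity telescopes from
`X * omitE e k = e_{k+1} - omitE e (k+1)`. -/
theorem X_mul_omitE_mul (he : e 0 = 1) (r s : ℕ) :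
    X * omitE e r * omitE e s = ∑ q ∈ range (min r s + 1),
      (C (e (r + s + 1 - q)) * omitE e q - C (e q) * omitE e (r + s + 1 - q)) := by
  rcases le_total r s with h | h
  · rw [min_eq_left h, X_mul_omitE_mul_of_le he]
  · rw [min_eq_right h, add_comm r s, ← X_mul_omitE_mul_of_le he]; ring

/-- `step_pow_omitE` with `step_pow_one` substituted, collected by the index `s` of `block e (l - s)`
so as to match `closed_succ`. -/
theorem step_pow_omitE' (h : IsNewton e p) (r l : ℕ) :
    (step p ^ (l + 1)) (omitE e r) = omitE e (r + l + 1) +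
      ∑ s ∈ range (l + 1), C (block e (l - s)) * ∑ q ∈ range (s + 1),
        C (((r + s - q : ℕ) : S) * e (r + s + 1 - q)) * omitE e q := by
  rw [step_pow_omitE h, ← add_assoc]
  congr 1
  simp only [step_pow_one h, mul_sum]
  -- reindex by `s = j + q`
  rw [sum_sigma', sum_sigma']
  refine sum_nbij' (fun z => ⟨z.1 + z.2, z.2⟩) (fun z => ⟨z.1 - z.2, z.2⟩) ?_ ?_ ?_ ?_ ?_
  · rintro ⟨j, q⟩; simp; omega
  · rintro ⟨s, q⟩; simp; omega
  · rintro ⟨j, q⟩; simp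
  · rintro ⟨s, q⟩; simp; omega
  · rintro ⟨j, q⟩; simp
    intro h1 h2
    rw [show r + (j + q) - q = r + j by omega, show r + (j + q) + 1 - q = r + j + 1 by omega,
      show l - (j+q) = l - j - q by omega]
    push_cast
    ring

/-! ### The positive cone -/

/-- The `e`-positive elements of degree `n`: sums of products `e_λ`, `λ ⊢ n`, with multiplicities in
`ℕ`. -/
def epos (e : ℕ → S) (n : ℕ) : AddSubmonoid S :=
  AddSubmonoid.closure (Set.range fun P : n.Partition => (P.parts.map e).prod)

theorem epos_one : (1 : S) ∈ epos e 0 :=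
  AddSubmonoid.subset_closure ⟨⟨0, by simp, by simp⟩, by simp⟩

theorem epos_e {k : ℕ} (hk : 0 < k) : e k ∈ epos e k :=
  AddSubmonoid.subset_closure ⟨⟨{k}, by simp [hk], by simp⟩, by simp⟩

theorem epos_mul {i j n : ℕ} {f g : S} (hf : f ∈ epos e i) (hg : g ∈ epos e j) (hn : i + j = n) :
    f * g ∈ epos e n := by
  subst hn
  induction hf using AddSubmonoid.closure_induction with
  | zero => simp
  | add x y _ _ h1 h2 => rw [add_mul]; exact add_mem h1 h2
  | mem x hx =>
    obtain ⟨P, rfl⟩ := hx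
    induction hg using AddSubmonoid.closure_induction with
    | zero => simp
    | add x y _ _ h1 h2 => rw [mul_add]; exact add_mem h1 h2
    | mem y hy =>
      obtain ⟨Q, rfl⟩ := hy
      refine AddSubmonoid.subset_closure ⟨⟨P.parts + Q.parts, fun {k} hk => ?_, ?_⟩, ?_⟩
      · rcases Multiset.mem_add.1 hk with h | h
        exacts [P.parts_pos h, Q.parts_pos h]
      · simp [P.parts_sum, Q.parts_sum]
      · simp

theorem epos_natCast_mul {n : ℕ} {f : S} (k : ℕ) (hf : f ∈ epos e n) : (k : S) * f ∈ epos e n := by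
  rw [← nsmul_eq_mul]; exact nsmul_mem hf k

theorem epos_e' (he : e 0 = 1) (k : ℕ) : e k ∈ epos e k := by
  rcases k.eq_zero_or_pos with rfl | h
  · rw [he]; exact epos_one
  · exact epos_e h

theorem epos_block (n : ℕ) : block e n ∈ epos e n := by
  induction n using Nat.strong_induction_on with
  | _ n ih =>
    cases n with
    | zero => rw [block]; exact epos_one
    | succ n =>
      rw [block_succ]
      refine sum_mem fun k hk => ?_
      have := mem_range.1 hk
      exact epos_mul (epos_natCast_mul _ (epos_e k.succ_pos)) (ih (n - k) (by omega)) (by omega)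

/-- The cone of sums of products `f * omitE e q` with `f` an `e`-positive element of degree `n - q`. -/
noncomputable def posCone (e : ℕ → S) (n : ℕ) : AddSubmonoid S[X] :=
  AddSubmonoid.closure {g | ∃ k q f, k + q = n ∧ f ∈ epos e k ∧ g = C f * omitE e q}

theorem mem_posCone {k q n : ℕ} {f : S} (hf : f ∈ epos e k) (h : k + q = n) :
    C f * omitE e q ∈ posCone e n :=
  AddSubmonoid.subset_closure ⟨k, q, f, h, hf, rfl⟩

theorem omitE_mem (q : ℕ) : omitE e q ∈ posCone e q := by
  simpa using mem_posCone (e := e) (q := q) epos_one (zero_add q)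

theorem one_mem : (1 : S[X]) ∈ posCone e 0 := omitE_mem (e := e) 0

theorem C_mul_mem {k n i : ℕ} {f : S} {g : S[X]} (hf : f ∈ epos e k) (hg : g ∈ posCone e n)
    (h : k + n = i) : C f * g ∈ posCone e i := by
  induction hg using AddSubmonoid.closure_induction with
  | mem x hx =>
    obtain ⟨k', q, f', h', hf', rfl⟩ := hx
    rw [← mul_assoc, ← C_mul]
    exact mem_posCone (epos_mul hf hf' rfl) (by omega)
  | zero => simp
  | add x y _ _ h1 h2 => rw [mul_add]; exact add_mem h1 h2

theorem step_mem (h : IsNewton e p) {n : ℕ} {g : S[X]} (hg : g ∈ posCone e n) :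
    step p g ∈ posCone e (n + 1) := by
  induction hg using AddSubmonoid.closure_induction with
  | mem x hx =>
    obtain ⟨k, q, f, h', hf, rfl⟩ := hx
    rw [← smul_eq_C_mul, map_smul, step_omitE h, smul_eq_C_mul]
    refine C_mul_mem hf (add_mem (omitE_mem _) ?_) (n := q + 1) (by omega)
    have := mem_posCone (e := e) (q := 0) (n := q + 1)
      (epos_natCast_mul q (epos_e (e := e) q.succ_pos)) rfl
    simpa [omitE] using this
  | zero => simp
  | add x y _ _ h1 h2 => rw [map_add]; exact add_mem h1 h2

theorem step_pow_mem (h : IsNewton e p) {n : ℕ} {g : S[X]} (hg : g ∈ posCone e n) (l : ℕ) :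
    (step p ^ l) g ∈ posCone e (n + l) := by
  induction l with
  | zero => simpa
  | succ l ih => rw [pow_succ', Module.End.mul_apply]; exact step_mem h ih

theorem tr_mem (h : IsNewton e p) {n : ℕ} {g : S[X]} (hg : g ∈ posCone e n) :
    tr p g ∈ epos e (n + 1) := by
  induction hg using AddSubmonoid.closure_induction with
  | mem x hx =>
    obtain ⟨k, q, f, h', hf, rfl⟩ := hx
    rw [← smul_eq_C_mul, map_smul, h, smul_eq_mul]
    have := epos_natCast_mul (q + 1) (epos_e (e := e) q.succ_pos)
    push_cast at this
    exact epos_mul hf this (by omega)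
  | zero => simp
  | add x y _ _ h1 h2 => rw [map_add]; exact add_mem h1 h2

/-- Closing a cycle preserves positivity. Extending `omitE e r` by a path of `l + 1` further vertices
and discarding the colourings in which the new last vertex has the colour of the old one amounts
to attaching a cycle of length `l + 2` by its chord. In the difference, the coefficient of
`block e (l - s) * e_{r+s+1-q} * omitE e q`, for `q ≤ min r s`, is `(r + s - q) - s = r - q ≥ 0`. -/
theorem cycle_omitE_mem (he : e 0 = 1) (h : IsNewton e p) (r l : ℕ) :
    (step p ^ (l + 1)) (omitE e r) - omitE e r * closed p (l + 1) ∈ posCone e (r + l + 1) := by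
  have key : (step p ^ (l + 1)) (omitE e r) - omitE e r * closed p (l + 1) =
      omitE e (r + l + 1) + ∑ s ∈ range (l + 1), C (block e (l - s)) *
        (∑ q ∈ range (s + 1), C (((r + s - q : ℕ) : S) * e (r + s + 1 - q)) * omitE e q
          - (s : S[X]) * (X * omitE e r * omitE e s)) := by
    rw [step_pow_omitE' h, closed_succ h, add_sub_assoc, mul_sum, mul_sum, ← sum_sub_distrib]
    congr 1
    refine sum_congr rfl fun s _ => ?_
    ring
  rw [key]
  refine add_mem (omitE_mem _) (sum_mem fun s hs => ?_)
  have hs := mem_range.1 hs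
  refine C_mul_mem (epos_block _) (n := r + s + 1) ?_ (by omega)
  have split : ∑ q ∈ range (s + 1), C (((r + s - q : ℕ) : S) * e (r + s + 1 - q)) * omitE e q
      = ∑ q ∈ range (min r s + 1), C (((r + s - q : ℕ) : S) * e (r + s + 1 - q)) * omitE e q
      + ∑ q ∈ Ico (min r s + 1) (s + 1),
          C (((r + s - q : ℕ) : S) * e (r + s + 1 - q)) * omitE e q :=
    (sum_range_add_sum_Ico _ (by omega)).symm
  -- the product rule involves `q ≤ min r s` only; the terms with `q > min r s` are positive as they are
  rw [split, X_mul_omitE_mul he, add_sub_right_comm, mul_sum, ← sum_sub_distrib]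
  refine add_mem (sum_mem fun q hq => ?_) (sum_mem fun q hq => ?_)
  · have hq := mem_range.1 hq
    have : C (((r + s - q : ℕ) : S) * e (r + s + 1 - q)) * omitE e q -
        (s : S[X]) * (C (e (r + s + 1 - q)) * omitE e q - C (e q) * omitE e (r + s + 1 - q)) =
        C (((r - q : ℕ) : S) * e (r + s + 1 - q)) * omitE e q +
        C ((s : S) * e q) * omitE e (r + s + 1 - q) := by
      rw [show r + s - q = (r - q) + s by omega]
      simp only [C_mul, map_natCast, Nat.cast_add, C_add]
      ring
    rw [this]
    exact add_mem (mem_posCone (epos_natCast_mul _ (epos_e' he _)) (by omega))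
      (mem_posCone (epos_natCast_mul _ (epos_e' he _)) (by omega))
  · have hq := mem_Ico.1 hq
    exact mem_posCone (epos_natCast_mul _ (epos_e' he _)) (by omega)

theorem cycle_mem (he : e 0 = 1) (h : IsNewton e p) {n : ℕ} {g : S[X]} (hg : g ∈ posCone e n)
    (l : ℕ) : (step p ^ (l + 1)) g - g * closed p (l + 1) ∈ posCone e (n + l + 1) := by
  induction hg using AddSubmonoid.closure_induction with
  | mem x hx =>
    obtain ⟨k, q, f, h', hf, rfl⟩ := hx
    rw [← smul_eq_C_mul, map_smul, smul_mul_assoc, ← smul_sub, smul_eq_C_mul]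
    exact C_mul_mem hf (cycle_omitE_mem he h q l) (by omega)
  | zero => simp
  | add x y _ _ h1 h2 =>
    rw [map_add, add_mul, add_sub_add_comm]; exact add_mem h1 h2

/-- The colourings of the hat `H_{a, l+2, b}` with last vertex coloured `X`: a path with `a` edges, a
cycle of length `l + 2` closed by the chord, and a path with `b` further edges. -/
noncomputable def hatPoly (p : ℕ → S) (a l b : ℕ) : S[X] :=
  (step p ^ b) ((step p ^ (l + 1)) ((step p ^ a) 1) - (step p ^ a) 1 * closed p (l + 1))

theorem tr_hatPoly_mem (he : e 0 = 1) (h : IsNewton e p) (a l b : ℕ) :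
    tr p (hatPoly p a l b) ∈ epos e (a + (l + 2) + b) := by
  have h1 := step_pow_mem h (one_mem (e := e)) a
  have := tr_mem h (step_pow_mem h (cycle_mem he h h1 l) b)
  rw [hatPoly]
  convert this using 2
  omega

end Algebra
end Hat

namespace Hat
open Polynomial

/-! ### Colourings with finitely many colours -/

/-- `κ` is a proper colouring of the vertices `0, …, n` for the (one-sided) adjacency relation `E`. -/
def Proper {ι : Type*} (E : ℕ → ℕ → Prop) (n : ℕ) (κ : Fin (n + 1) → ι) : Prop :=
  ∀ v w : Fin (n + 1), E v w → κ v ≠ κ w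

/-- Properness when the new last vertex `n + 1` is joined to `n` only. -/
theorem proper_snoc {ι : Type*} {E : ℕ → ℕ → Prop} (hE : ∀ v w, E v w → v < w) (n : ℕ)
    (hn : ∀ v ≤ n, E v (n + 1) ↔ v = n) (κ : Fin (n + 1) → ι) (i : ι) :
    Proper E (n + 1) (Fin.snoc κ i : Fin (n + 2) → ι) ↔ Proper E n κ ∧ κ (Fin.last n) ≠ i := by
  unfold Proper
  constructor
  · intro h
    refine ⟨fun v w hvw => ?_, ?_⟩
    · simpa using h v.castSucc w.castSucc hvw
    · have := h (Fin.last n).castSucc (Fin.last _) (by simpa using (hn n le_rfl).2 rfl)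
      simpa using this
  · rintro ⟨h1, h2⟩ v w hvw
    induction w using Fin.lastCases with
    | last =>
      induction v using Fin.lastCases with
      | last => exact absurd (hE _ _ hvw) (lt_irrefl _)
      | cast v =>
        have hv : v = Fin.last n := Fin.ext ((hn v (by omega)).1 (by simpa using hvw))
        subst hv
        simpa using h2
    | cast w =>
      induction v using Fin.lastCases with
      | last =>
        have := hE _ _ hvw
        simp at this
        omega
      | cast v => simpa using h1 v w hvw

/-- The edges `v < w` of the hat `H_{a, l+2, b}`, for every `b` at once. -/
def hatE (a l v w : ℕ) : Prop := v + 1 = w ∨ v = a ∧ w = a + l + 1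

/-- The edges `v < w` of a path. -/
def pathE (v w : ℕ) : Prop := v + 1 = w

section Walks
variable {ι R : Type*} [Fintype ι] [CommRing R] (x : ι → R)

/-- `step` on functions of the colour of the last vertex, for a finite set `ι` of colours with weights
`x`. -/
def opStep (g : ι → R) (i : ι) : R := ∑ j, x j * g j - x i * g i

/-- `opStep` is self-adjoint for the bilinear form `∑ j, x j * f j * g j`: walks can be reversed. -/
theorem opStep_adjoint (f g : ι → R) (l : ℕ) :
    ∑ j, x j * f j * ((opStep x)^[l] g) j = ∑ j, x j * ((opStep x)^[l] f) j * g j := by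
  induction l generalizing f with
  | zero => simp
  | succ l ih =>
    rw [Function.iterate_succ_apply', Function.iterate_succ_apply, ← ih]
    generalize (opStep x)^[l] g = g
    simp only [opStep, mul_sub, sub_mul, sum_sub_distrib]
    congr 1
    · simp only [sum_mul, mul_sum]
      rw [sum_comm]
      refine sum_congr rfl fun i _ => sum_congr rfl fun j _ => ?_
      ring
    · refine sum_congr rfl fun i _ => ?_
      ring

section Realize
variable {S : Type*} [CommRing S] {φ : S →+* R} {p : ℕ → S}

theorem map_tr (hp : ∀ k, φ (p (k + 1)) = ∑ i, x i ^ (k + 1)) (g : S[X]) :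
    φ (tr p g) = ∑ i, x i * g.eval₂ φ (x i) := by
  induction g using Polynomial.induction_on' with
  | add g h hg hh => simp [eval₂_add, mul_add, sum_add_distrib, hg, hh]
  | monomial n c =>
    simp [tr, Polynomial.lsum_apply, hp, mul_sum, pow_succ]
    refine sum_congr rfl fun i _ => ?_
    ring

theorem eval_step (hp : ∀ k, φ (p (k + 1)) = ∑ i, x i ^ (k + 1)) (g : S[X]) :
    (fun i => (step p g).eval₂ φ (x i)) = opStep x fun i => g.eval₂ φ (x i) := by
  ext i
  rw [step_apply, eval₂_sub, eval₂_C, map_tr x hp, eval₂_mul, eval₂_X, opStep]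

theorem eval_step_pow (hp : ∀ k, φ (p (k + 1)) = ∑ i, x i ^ (k + 1)) (g : S[X]) (l : ℕ) :
    (fun i => ((step p ^ l) g).eval₂ φ (x i)) = (opStep x)^[l] fun i => g.eval₂ φ (x i) := by
  induction l with
  | zero => simp
  | succ l ih =>
    rw [Function.iterate_succ_apply', ← ih, pow_succ', Module.End.mul_apply, eval_step x hp]

/-- The walks of `l` steps starting at colour `c` with initial value `s`, evaluated at the end colour
`c`. -/
theorem eval_closed [DecidableEq ι] (hp : ∀ k, φ (p (k + 1)) = ∑ i, x i ^ (k + 1)) (c : ι) (s : R)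
    (l : ℕ) : ((opStep x)^[l] fun j => if j = c then s else 0) c =
      s * (closed p l).eval₂ φ (x c) := by
  induction l with
  | zero => simp [closed]
  | succ l ih =>
    rw [Function.iterate_succ_apply', opStep, ih, closed, eval₂_mul, eval₂_sub, eval₂_X]
    have h1 := opStep_adjoint x 1 (fun j => if j = c then s else 0) l
    have h2 := congrFun (eval_step_pow x hp 1 l) c
    simp only [eval₂_one] at h2
    simp only [Pi.one_apply, mul_one, mul_ite, mul_zero, sum_ite_eq', mem_univ, if_true] at h1
    rw [h1, h2]
    change x c * ((opStep x)^[l] 1) c * s - _ = s * (x c * (((opStep x)^[l] 1) c - _))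
    ring

end Realize

open Classical in
/-- The sum of weights of the colourings `κ` of `0, …, n` that satisfy `Q` and give the last vertex
colour `i`; the weight of the last vertex is left out. -/
noncomputable def walkSum (n : ℕ) (Q : (Fin (n + 1) → ι) → Prop) (i : ι) : R :=
  ∑ κ : Fin (n + 1) → ι,
    if Q κ ∧ κ (Fin.last n) = i then ∏ v : Fin n, x (κ v.castSucc) else 0

open Classical in
theorem sum_x_mul_walkSum (n : ℕ) (Q : (Fin (n + 1) → ι) → Prop) :
    ∑ i, x i * walkSum x n Q i = ∑ κ : Fin (n + 1) → ι, if Q κ then ∏ v, x (κ v) else 0 := by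
  simp only [walkSum, mul_sum]
  rw [sum_comm]
  refine sum_congr rfl fun κ _ => ?_
  rw [Finset.sum_eq_single (κ (Fin.last n)) (fun i _ hi => by simp [hi.symm]) (by simp),
    Fin.prod_univ_castSucc]
  by_cases h : Q κ <;> simp [h, mul_comm]

theorem walkSum_succ (n : ℕ) (Q : (Fin (n + 1) → ι) → Prop) (Q' : (Fin (n + 2) → ι) → Prop)
    (h : ∀ κ i, Q' (Fin.snoc κ i) ↔ Q κ ∧ κ (Fin.last n) ≠ i) :
    walkSum x (n + 1) Q' = opStep x (walkSum x n Q) := by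
  classical
  ext i
  rw [opStep, sum_x_mul_walkSum, walkSum, walkSum, mul_sum, ← sum_sub_distrib,
    ← (Fin.snocEquiv fun _ => ι).sum_comp, Fintype.sum_prod_type_right]
  refine sum_congr rfl fun κ _ => ?_
  simp only [Fin.snocEquiv, Equiv.coe_fn_mk, Fin.snoc_last, Fin.snoc_castSucc, h]
  rw [Finset.sum_eq_single i (fun j _ hj => by simp [hj]) (by simp), Fin.prod_univ_castSucc]
  by_cases hQ : Q κ <;> by_cases hi : κ (Fin.last n) = i <;> simp [hQ, hi, mul_comm]

theorem walkSum_zero (Q : (Fin 1 → ι) → Prop) (h : ∀ κ, Q κ) : walkSum x 0 Q = 1 := by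
  classical
  ext i
  rw [walkSum, ← (Equiv.funUnique (Fin 1) ι).symm.sum_comp]
  simp [h]

theorem walkSum_path (n : ℕ) : walkSum x n (Proper pathE n) = (opStep x)^[n] 1 := by
  induction n with
  | zero => exact walkSum_zero x _ fun κ v w h => by simp [pathE] at h
  | succ n ih =>
    rw [Function.iterate_succ_apply', ← ih]
    refine walkSum_succ x n _ _ (proper_snoc (fun v w h => ?_) n fun v _ => ?_) <;>
    simp only [pathE] at * <;> omega

/-- Fixing the colour of vertex `a` of a path to `c` restarts the walk from a multiple of the indicator
of `c`. -/
theorem walkSum_pin [DecidableEq ι] (a l : ℕ) (c : ι) :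
    walkSum x (a + l) (fun κ => Proper pathE (a + l) κ ∧ ∀ v : Fin _, (v : ℕ) = a → κ v = c) =
      (opStep x)^[l] fun j => if j = c then ((opStep x)^[a] 1) c else 0 := by
  induction l with
  | zero =>
    rw [← walkSum_path]
    ext j
    have : (fun κ : Fin (a + 1) → ι =>
          Proper pathE a κ ∧ ∀ v : Fin (a + 1), (v : ℕ) = a → κ v = c) =
        fun κ => Proper pathE a κ ∧ κ (Fin.last a) = c := by
      ext κ
      exact and_congr_right fun _ => ⟨fun h => h _ rfl, fun h v hv => by
        rwa [show v = Fin.last a from Fin.ext hv]⟩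
    change walkSum x a (fun κ => Proper pathE a κ ∧ ∀ v : Fin (a + 1), (v : ℕ) = a → κ v = c) j =
      if j = c then walkSum x a (Proper pathE a) c else 0
    rw [this]
    simp only [walkSum]
    split_ifs with h
    · subst h
      refine sum_congr rfl fun κ _ => ?_
      congr 1
      simp
    · refine sum_eq_zero fun κ _ => if_neg ?_
      rintro ⟨⟨_, h1⟩, h2⟩
      exact h (h2.symm.trans h1)
  | succ l ih =>
    rw [Function.iterate_succ_apply', ← ih]
    refine walkSum_succ x (a + l) _ _ fun κ i => ?_
    have := proper_snoc (E := pathE) (ι := ι) (fun v w h => by simp only [pathE] at h; omega)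
      (a + l) (fun v _ => by simp only [pathE]; omega) κ i
    have h2 : (∀ v : Fin (a + l + 2), (v : ℕ) = a → (Fin.snoc κ i : Fin (a + l + 2) → ι) v = c) ↔
        ∀ v : Fin _, (v : ℕ) = a → κ v = c := by
      rw [Fin.forall_fin_succ']
      simp
      intro _ h
      omega
    exact (and_congr this h2).trans and_right_comm

/-- The chord from vertex `a` to the last vertex excludes the path colourings whose values at these two
vertices agree. -/
theorem walkSum_hat_base (a l : ℕ) (i : ι) :
    walkSum x (a + (l + 1)) (Proper (hatE a l) (a + (l + 1))) i =
    walkSum x (a + (l + 1)) (Proper pathE (a + (l + 1))) i -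
    walkSum x (a + (l + 1))
      (fun κ => Proper pathE (a + (l + 1)) κ ∧ ∀ v : Fin _, (v : ℕ) = a → κ v = i) i := by
  classical
  simp only [walkSum]
  rw [← sum_sub_distrib]
  refine sum_congr rfl fun κ _ => ?_
  set u : Fin (a + (l + 1) + 1) := ⟨a, by omega⟩
  have h1 : (∀ v : Fin (a + (l + 1) + 1), (v : ℕ) = a → κ v = i) ↔ κ u = i :=
    ⟨fun h => h _ rfl, fun h v hv => by rwa [show v = u from Fin.ext hv]⟩
  have h2 : Proper (hatE a l) (a + (l + 1)) κ ↔
      Proper pathE (a + (l + 1)) κ ∧ κ u ≠ κ (Fin.last _) := by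
    constructor
    · exact fun h => ⟨fun v w hvw => h v w (Or.inl hvw), h _ _ (Or.inr ⟨rfl, rfl⟩)⟩
    · rintro ⟨h, h'⟩ v w (hvw | ⟨hv, hw⟩)
      · exact h v w hvw
      · rwa [show v = u from Fin.ext hv, show w = Fin.last _ from Fin.ext hw]
  simp only [h1, h2]
  by_cases hP : Proper pathE (a + (l + 1)) κ <;> by_cases hi : κ (Fin.last _) = i <;>
    by_cases hu : κ u = i <;> simp [hP, hi, hu]

variable {S : Type*} [CommRing S] {φ : S →+* R} {p : ℕ → S}

theorem walkSum_hat (hp : ∀ k, φ (p (k + 1)) = ∑ i, x i ^ (k + 1)) (a l b : ℕ) :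
    walkSum x (a + (l + 1) + b) (Proper (hatE a l) (a + (l + 1) + b)) =
      fun i => (hatPoly p a l b).eval₂ φ (x i) := by
  classical
  rw [hatPoly, eval_step_pow x hp]
  induction b with
  | zero =>
    ext i
    have h1 := eval_step_pow x hp 1 a
    simp only [eval₂_one] at h1
    have h3 := eval_step_pow x hp ((step p ^ a) 1) (l + 1)
    rw [Nat.add_zero, walkSum_hat_base, walkSum_path, walkSum_pin, eval_closed x hp,
      Function.iterate_zero, id, eval₂_sub, eval₂_mul, congrFun h3 i, h1, congrFun h1 i,
      ← Function.iterate_add_apply, add_comm a (l + 1)]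
    rfl
  | succ b ih =>
    rw [Function.iterate_succ_apply', ← ih]
    refine walkSum_succ x (a + (l + 1) + b) _ _ (proper_snoc (fun v w h => ?_) _ fun v _ => ?_) <;>
    simp only [hatE] at * <;> omega

open Classical in
/-- In finitely many colours, the chromatic polynomial sum of the hat is the image of
`tr p (hatPoly p a l b)`. -/
theorem sum_hat (hp : ∀ k, φ (p (k + 1)) = ∑ i, x i ^ (k + 1)) (a l b K : ℕ)
    (hK : K = a + (l + 1) + b + 1) :
    ∑ κ : Fin K → ι, (if ∀ v w : Fin K, hatE a l v w → κ v ≠ κ w then ∏ v, x (κ v) else 0) =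
      φ (tr p (hatPoly p a l b)) := by
  subst hK
  have h : ∀ i, (hatPoly p a l b).eval₂ φ (x i) =
      walkSum x _ (Proper (hatE a l) (a + (l + 1) + b)) i :=
    fun i => (congrFun (walkSum_hat x hp a l b) i).symm
  simp only [map_tr x hp, h, sum_x_mul_walkSum]
  exact sum_congr rfl fun κ _ => if_congr Iff.rfl rfl rfl

end Walks
end Hat

namespace Hat

/-! ### Passage to countably many variables -/

theorem exists_coeff_of_mem {S : Type*} [CommRing S] [Algebra ℚ S] {e : ℕ → S} {n : ℕ} {f : S}
    (hf : f ∈ epos e n) : ∃ c : n.Partition → ℚ, (∀ P, 0 ≤ c P) ∧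
      f = ∑ P : n.Partition, c P • (P.parts.map e).prod := by
  classical
  induction hf using AddSubmonoid.closure_induction with
  | mem x hx =>
    obtain ⟨P, rfl⟩ := hx
    refine ⟨Pi.single P 1, fun Q => ?_, ?_⟩
    · by_cases h : Q = P
      · subst h; simp
      · simp [h]
    · simp [Pi.single_apply, ite_smul]
  | zero => exact ⟨0, by simp, by simp⟩
  | add x y _ _ h1 h2 =>
    obtain ⟨c, hc, rfl⟩ := h1
    obtain ⟨d, hd, rfl⟩ := h2
    exact ⟨c + d, fun P => add_nonneg (hc P) (hd P), by simp [add_smul, sum_add_distrib]⟩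

open Polynomial in
theorem omitE_eq_sum {S : Type*} [CommRing S] {e : ℕ → S} (he : e 0 = 1) (k : ℕ) :
    omitE e k = ∑ r ∈ range (k + 1), (-1) ^ r * X ^ r * C (e (k - r)) := by
  induction k with
  | zero => simp [omitE, he]
  | succ k ih =>
    rw [omitE, ih, sum_range_succ' _ (k + 1), mul_sum, sub_eq_add_neg, ← sum_neg_distrib, add_comm]
    simp only [Nat.add_sub_add_right, pow_zero, Nat.sub_zero, one_mul]
    congr 1
    refine sum_congr rfl fun r _ => ?_
    ring

theorem neg_one_pow_mul_self (R : Type*) [CommRing R] (r : ℕ) : (-1 : R) ^ r * (-1) ^ r = 1 := by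
  rw [← mul_pow, neg_mul_neg, one_mul, one_pow]

section Restrict
open MvPowerSeries

/-- The series without any monomial supported in `N`; equivalently, the kernel of setting all variables
`x_i`, `i ∉ N`, to zero. -/
noncomputable def outside (N : Finset ℕ) : Ideal SymF where
  carrier := {f | ∀ d : ℕ →₀ ℕ, d.support ⊆ N → coeff d f = 0}
  add_mem' hf hg d hd := by rw [map_add, hf d hd, hg d hd, add_zero]
  zero_mem' d _ := by simp
  smul_mem' g f hf d hd := by
    classical
    rw [smul_eq_mul, coeff_mul]
    refine sum_eq_zero fun z hz => ?_
    rw [hf z.2 ((Finsupp.support_mono ?_).trans hd), mul_zero]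
    rw [← mem_antidiagonal.1 hz]
    exact le_add_self

/-- Restriction to the finitely many variables `x_i`, `i ∈ N`. -/
noncomputable abbrev restr (N : Finset ℕ) : SymF →+* SymF ⧸ outside N :=
  Ideal.Quotient.mk (outside N)

theorem restr_eq_iff {N : Finset ℕ} {f g : SymF} :
    restr N f = restr N g ↔ ∀ d : ℕ →₀ ℕ, d.support ⊆ N → coeff d f = coeff d g := by
  rw [Ideal.Quotient.eq]
  exact forall₂_congr fun d _ => by rw [map_sub, sub_eq_zero]

/-- A series is determined by its restrictions to finite sets of variables. -/
theorem eq_of_restr {f g : SymF} (h : ∀ N, restr N f = restr N g) : f = g :=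
  MvPowerSeries.ext fun d => restr_eq_iff.1 (h d.support) d subset_rfl

/-- The power sum `∑ i, x_i ^ k`; for `k = 0` the infinite sum has no meaning and the value is not
used. -/
noncomputable def psumS (k : ℕ) : SymF :=
  open Classical in fun d : ℕ →₀ ℕ => if ∃ i, d = Finsupp.single i k then (1 : ℚ) else 0

theorem prod_X_eq {α : Type*} (s : Finset α) (f : α → ℕ) :
    ∏ v ∈ s, (X (f v) : SymF) = monomial (∑ v ∈ s, Finsupp.single (f v) 1) 1 := by
  classical
  induction s using Finset.induction_on with
  | empty => simp
  | insert a s ha ih => rw [prod_insert ha, sum_insert ha, ih, X, monomial_mul_monomial, one_mul]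

theorem restr_psumS (N : Finset ℕ) (k : ℕ) :
    restr N (psumS (k + 1)) = ∑ i : N, (restr N (X (i : ℕ))) ^ (k + 1) := by
  classical
  simp only [← map_pow, ← map_sum]
  rw [restr_eq_iff]
  intro d hd
  simp only [map_sum, coeff_X_pow]
  change (if _ then _ else _) = _
  split_ifs with h
  · obtain ⟨i, rfl⟩ := h
    have hi : i ∈ N := hd (by simp)
    rw [Finset.sum_eq_single ⟨i, hi⟩, if_pos rfl]
    · exact fun b _ hb => if_neg fun h =>
        hb (Subtype.ext ((Finsupp.single_left_inj k.succ_ne_zero).1 h).symm)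
    · simp
  · push Not at h
    exact (sum_eq_zero fun (i : N) _ => if_neg (h i)).symm

theorem restr_esymm (N : Finset ℕ) (k : ℕ) :
    restr N (esymm k) = ∑ t ∈ powersetCard k (univ : Finset N), ∏ i ∈ t, restr N (X (i : ℕ)) := by
  classical
  simp only [← map_prod, ← map_sum]
  rw [restr_eq_iff]
  intro d hd
  simp only [map_sum, prod_X_eq, coeff_monomial]
  have hind : ∀ (t : Finset N) (i : N),
      (∑ v ∈ t, Finsupp.single (v : ℕ) 1 : ℕ →₀ ℕ) i = if i ∈ t then 1 else 0 := by
    intro t i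
    simp [Finsupp.finsetSum_apply, Finsupp.single_apply]
  have hind' : ∀ (t : Finset N) (i : ℕ), i ∉ N →
      (∑ v ∈ t, Finsupp.single (v : ℕ) 1 : ℕ →₀ ℕ) i = 0 := by
    intro t i hi
    rw [Finsupp.finsetSum_apply]
    refine sum_eq_zero fun v _ => Finsupp.single_eq_of_ne ?_
    rintro rfl
    exact hi v.2
  have hdeg : ∀ t : Finset N,
      ((∑ v ∈ t, Finsupp.single (v : ℕ) 1 : ℕ →₀ ℕ).sum fun _ e => e) = #t := by
    intro t
    change Finsupp.degree _ = _
    rw [map_sum]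
    simp
  change (if _ then _ else _) = _
  split_ifs with h
  · have hdt : d = ∑ v ∈ univ.filter (fun i : N => d i ≠ 0), Finsupp.single (v : ℕ) 1 := by
      ext i
      by_cases hi : i ∈ N
      · rw [hind _ ⟨i, hi⟩]
        have := h.2 i
        simp
        split_ifs <;> omega
      · rw [hind' _ i hi]
        exact Finsupp.notMem_support_iff.1 fun h => hi (hd h)
    rw [Finset.sum_eq_single (univ.filter fun i : N => d i ≠ 0), if_pos hdt]
    · intro t _ ht
      refine if_neg fun h' => ht ?_
      ext i
      rw [mem_filter, h', hind t i]
      simp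
    · intro hn
      refine absurd ?_ hn
      rw [mem_powersetCard]
      refine ⟨subset_univ _, ?_⟩
      rw [← hdeg, ← hdt, h.1]
  · refine (sum_eq_zero fun t ht => if_neg ?_).symm
    rintro rfl
    refine h ⟨(hdeg t).trans (mem_powersetCard.1 ht).2, fun i => ?_⟩
    by_cases hi : i ∈ N
    · rw [hind _ ⟨i, hi⟩]; split_ifs <;> simp
    · rw [hind' _ i hi]; simp

open Classical in
/-- In finitely many variables, `csf` is a sum of monomials over proper colourings. -/
theorem restr_csf {V : Type} [Fintype V] (G : SimpleGraph V) (N : Finset ℕ) :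
    restr N (csf G) = ∑ κ : V → N,
      if ∀ v w, G.Adj v w → κ v ≠ κ w then ∏ v, restr N (X (κ v : ℕ)) else 0 := by
  have : ∀ κ : V → N, (if ∀ v w, G.Adj v w → κ v ≠ κ w then ∏ v, restr N (X (κ v : ℕ)) else 0) =
      restr N (if ∀ v w, G.Adj v w → κ v ≠ κ w then ∏ v, X (κ v : ℕ) else 0) := by
    intro κ
    split_ifs <;> simp
  simp only [this, ← map_sum]
  rw [restr_eq_iff]
  intro d hd
  have hfib : ∀ (κ : V → ℕ) (i : ℕ),
      (∑ v, Finsupp.single (κ v) 1 : ℕ →₀ ℕ) i = {v | κ v = i}.ncard := by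
    intro κ i
    rw [Finsupp.finsetSum_apply, Set.ncard_eq_toFinset_card']
    simp [Finsupp.single_apply]
  -- a colouring with exponent vector `d` takes values in the support of `d`, hence in `N`
  have hset : {κ : V → ℕ | (∀ v w, G.Adj v w → κ v ≠ κ w) ∧ ∀ i : ℕ, {v | κ v = i}.ncard = d i} =
      (fun (κ : V → N) v => (κ v : ℕ)) ''
        ((univ.filter fun κ : V → N => (∀ v w, G.Adj v w → κ v ≠ κ w) ∧
          d = ∑ v, Finsupp.single (κ v : ℕ) 1 : Finset (V → N)) : Set (V → N)) := by
    ext κ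
    simp only [Set.mem_ofPred_eq, Set.mem_image, coe_filter, mem_univ, true_and]
    constructor
    · rintro ⟨h1, h2⟩
      have hN : ∀ v, κ v ∈ N := by
        intro v
        refine hd (Finsupp.mem_support_iff.2 ?_)
        rw [← h2]
        exact Set.ncard_ne_zero_of_mem (a := v) rfl
      refine ⟨fun v => ⟨κ v, hN v⟩, ⟨fun v w h => ?_, ?_⟩, rfl⟩
      · simpa using h1 v w h
      · ext i
        rw [hfib, h2]
    · rintro ⟨κ, ⟨h1, h2⟩, rfl⟩
      refine ⟨fun v w h h' => h1 v w h (Subtype.ext h'), fun i => ?_⟩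
      rw [h2, hfib]
  change ((Set.ncard _ : ℕ) : ℚ) = _
  rw [hset, Set.ncard_image_of_injective, Set.ncard_coe_finset, card_filter, map_sum]
  · push_cast
    refine sum_congr rfl fun κ _ => ?_
    rw [prod_X_eq]
    split_ifs with h1 h2 h2
    · rw [coeff_monomial, if_pos h1.2]
    · exact absurd h1.1 h2
    · rw [coeff_monomial, if_neg fun h => h1 ⟨h2, h⟩]
    · simp
  · intro κ κ' h
    ext v
    exact congrFun h v

theorem esymm_zero : esymm 0 = 1 := by
  classical
  refine MvPowerSeries.ext fun d => ?_
  rw [coeff_one]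
  change (if _ then _ else _) = _
  refine if_congr ⟨fun h => ?_, ?_⟩ rfl rfl
  · exact (Finsupp.degree_eq_zero_iff d).1 h.1
  · rintro rfl
    simp

/-- Reduces to Mathlib's Newton identity for `MvPolynomial` after restriction to finitely many
variables. -/
theorem isNewton : IsNewton esymm psumS := by
  intro k
  refine eq_of_restr fun N => ?_
  have he : ∀ j, restr N (esymm j) =
      MvPolynomial.aeval (fun i : N => restr N (X (i : ℕ))) (MvPolynomial.esymm N ℤ j) := by
    intro j
    simp [restr_esymm, MvPolynomial.esymm]
  have hp : ∀ j, ∑ i : N, restr N (X (i : ℕ)) ^ j =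
      MvPolynomial.aeval (fun i : N => restr N (X (i : ℕ))) (MvPolynomial.psum N ℤ j) := by
    intro j
    simp [MvPolynomial.psum]
  have newton := congrArg (MvPolynomial.aeval fun i : N => restr N (X (i : ℕ)))
    (MvPolynomial.mul_esymm_eq_sum N ℤ (k + 1))
  rw [map_tr (fun i : N => restr N (X (i : ℕ))) (restr_psumS N), omitE_eq_sum esymm_zero]
  simp only [map_mul, map_natCast, ← he, map_pow, map_neg, map_one, map_sum, ← hp] at newton
  rw [map_mul, map_add, map_natCast, map_one, ← Nat.cast_succ, newton, sum_filter,
    Finset.Nat.sum_antidiagonal_eq_sum_range_succ_mk, sum_range_succ _ (k + 1),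
    if_neg (by simp), add_zero]
  simp only [Polynomial.eval₂_finsetSum, mul_sum]
  rw [sum_comm, ← sum_range_reflect]
  refine sum_congr rfl fun r hr => ?_
  have hr := mem_range.1 hr
  rw [if_pos (by simpa using hr)]
  obtain ⟨s, rfl⟩ : ∃ s, k = r + s := ⟨k - r, by omega⟩
  rw [show r + s + 1 - 1 - r = s by omega, show r + s - s = r by omega,
    show r + s + 1 - r = s + 1 by omega, mul_sum]
  refine sum_congr rfl fun i _ => ?_
  have h1 := neg_one_pow_mul_self (SymF ⧸ outside N) r
  simp only [Polynomial.eval₂_mul, Polynomial.eval₂_pow, Polynomial.eval₂_neg, Polynomial.eval₂_one,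
    Polynomial.eval₂_X, Polynomial.eval₂_C]
  linear_combination (-(-1) ^ s * restr N (X (i : ℕ)) ^ (s + 1) * restr N (esymm r)) * h1

theorem csf_hat (a l b : ℕ) : csf (hatG a (l + 2) b) = tr psumS (hatPoly psumS a l b) := by
  classical
  refine eq_of_restr fun N => ?_
  rw [restr_csf, ← sum_hat (fun i : N => restr N (X (i : ℕ))) (restr_psumS N) a l b
    (a + (l + 2) + b) (by omega)]
  refine sum_congr (by ext; simp) fun κ _ => ?_
  have key : (∀ v w, (hatG a (l + 2) b).Adj v w → κ v ≠ κ w) ↔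
      ∀ v w : Fin (a + (l + 2) + b), hatE a l v w → κ v ≠ κ w := by
    refine ⟨fun h v w hvw => h v w ?_, fun h v w hvw => ?_⟩
    · rw [hatG, SimpleGraph.fromRel_adj]
      refine ⟨?_, Or.inl hvw⟩
      rintro rfl
      simp only [hatE] at hvw
      omega
    · rw [hatG, SimpleGraph.fromRel_adj] at hvw
      rcases hvw.2 with h' | h'
      · exact h v w h'
      · exact (h w v h').symm
  by_cases h : ∀ v w, (hatG a (l + 2) b).Adj v w → κ v ≠ κ w
  · rw [if_pos h, if_pos (key.1 h)]
  · rw [if_neg h, if_neg (mt key.2 h)]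

end Restrict
end Hat

/-- Every hat is `e`-positive: `X_{H_{a,m,b}}` is a linear combination
of the elementary symmetric functions `e_λ`, `λ ⊢ a+m+b`, with nonnegative coefficients. -/
theorem stmt_15 (a m b : ℕ) (hm : 2 ≤ m) :
    ∃ c : (a + m + b).Partition → ℚ,
      (∀ P, 0 ≤ c P) ∧
      csf (hatG a m b) =
        ∑ P : (a + m + b).Partition, c P • (P.parts.map esymm).prod := by
  obtain ⟨l, rfl⟩ : ∃ l, m = l + 2 := ⟨m - 2, by omega⟩
  rw [Hat.csf_hat]
  exact Hat.exists_coeff_of_mem (Hat.tr_hatPoly_mem Hat.esymm_zero Hat.isNewton a l b)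
end
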